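/- Let μ_α and μ_β satisfy Assumption 2, let ω_α, ω_β be subordination functions for the pair, let μ_α ⊞ μ_β be the associated free additive convolution with continuous density ρ_{α⊞β}, and let E₀ be an exterior point of 𝒱_{α⊞β}. Then there exist constants C₁ > 0, K > 0 and δ > 0 such that either: |ρ_{α⊞β}(E) − C₁·√(E − E₀)| ≤ K·(E − E₀) for all E ∈ (E₀, E₀ + δ) and ρ_{α⊞β}(E) = 0 for all E ∈ (E₀ − δ, E₀]; or the mirror statement holds: |ρ_{α⊞β}(E) − C₁·√(E₀ − E)| ≤ K·(E₀ − E) for all E ∈ (E₀ − δ, E₀) and ρ_{α⊞β}(E) = 0 for all E ∈ [E₀, E₀ + δ). -/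

import Mathlib

open MeasureTheory Complex Set Filter Topology

noncomputable section

/-- Cauchy–Stieltjes transform `m_μ(z) = ∫ (x − z)⁻¹ dμ(x)`. -/
def mTr (μ : Measure ℝ) (z : ℂ) : ℂ := ∫ x, ((x : ℂ) - z)⁻¹ ∂μ

/-- Negative reciprocal Cauchy–Stieltjes transform `F_μ(z) = −1/m_μ(z)`. -/
def FTr (μ : Measure ℝ) (z : ℂ) : ℂ := -(mTr μ z)⁻¹

/-- `I_ν(ω) = ∫ |x − ω|⁻² dν(x)`. -/
def Inu (ν : Measure ℝ) (ω : ℂ) : ℝ := ∫ x, (Complex.normSq ((x : ℂ) - ω))⁻¹ ∂ν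

/-- Topological support of a Borel measure on ℝ. -/
def msupport (μ : Measure ℝ) : Set ℝ := {x | ∀ U : Set ℝ, IsOpen U → x ∈ U → 0 < μ U}

/-- `μh` is a Nevanlinna measure for the (centered) measure `μ`:
a finite Borel measure with `F_μ(ω) − ω = ∫ (x − ω)⁻¹ dμh(x)` on ℂ⁺. -/
def IsNevanlinna (μ μh : Measure ℝ) : Prop :=
  IsFiniteMeasure μh ∧ ∀ ω : ℂ, 0 < ω.im → FTr μ ω - ω = ∫ x, ((x : ℂ) - ω)⁻¹ ∂μh

/-- Subordination function for `μ` at time `t`. -/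
structure IsSubordination (μ : Measure ℝ) (t : ℝ) (ω : ℂ → ℂ) : Prop where
  contOn : ContinuousOn ω {z : ℂ | 0 ≤ z.im}
  mapsTo : ∀ z : ℂ, 0 ≤ z.im → 0 ≤ (ω z).im
  diff : DifferentiableOn ℂ ω {z : ℂ | 0 < z.im}
  im_ge : ∀ z : ℂ, 0 < z.im → z.im ≤ (ω z).im
  subord : ∀ z : ℂ, 0 < z.im → (t : ℂ) * ω z - z = ((t - 1 : ℝ) : ℂ) * FTr μ (ω z)

/-- `ν = μ^{⊞t}`, the free convolution power associated with the subordination function `ω`. -/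
def IsFreePower (μ : Measure ℝ) (t : ℝ) (ω : ℂ → ℂ) (ν : Measure ℝ) : Prop :=
  IsProbabilityMeasure ν ∧ ∀ z : ℂ, 0 < z.im → mTr ν z = mTr μ (ω z)

/-- Subordination functions for the pair `(μa, μb)`. -/
structure IsPairSubordination (μa μb : Measure ℝ) (ωa ωb : ℂ → ℂ) : Prop where
  diff_a : DifferentiableOn ℂ ωa {z : ℂ | 0 < z.im}
  diff_b : DifferentiableOn ℂ ωb {z : ℂ | 0 < z.im}
  im_a : ∀ z : ℂ, 0 < z.im → z.im ≤ (ωa z).im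
  im_b : ∀ z : ℂ, 0 < z.im → z.im ≤ (ωb z).im
  lim_a : Tendsto (fun η : ℝ => ωa (η * Complex.I) / (η * Complex.I)) atTop (nhds 1)
  lim_b : Tendsto (fun η : ℝ => ωb (η * Complex.I) / (η * Complex.I)) atTop (nhds 1)
  eq_a : ∀ z : ℂ, 0 < z.im → ωa z + ωb z - z = FTr μa (ωb z)
  eq_b : ∀ z : ℂ, 0 < z.im → ωa z + ωb z - z = FTr μb (ωa z)

/-- `ν = μa ⊞ μb`, the free additive convolution. -/
def IsFreeConv (μa μb : Measure ℝ) (ωb : ℂ → ℂ) (ν : Measure ℝ) : Prop :=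
  IsProbabilityMeasure ν ∧ ∀ z : ℂ, 0 < z.im → mTr ν z = mTr μa (ωb z)

/-- Assumption 1 of the paper: `μ` is a centered, compactly supported probability
measure whose singular part consists of finitely many atoms and whose absolutely
continuous part has a density `ρ` of Jacobi type, supported on finitely many
disjoint compact intervals with power-law behavior (exponents in `(−1,1)`). -/
structure JacobiData (μ : Measure ℝ) where
  ρ : ℝ → ℝ
  n : ℕ
  npos : 0 < n
  Em : Fin n → ℝ
  Ep : Fin n → ℝ
  βm : Fin n → ℝ
  βp : Fin n → ℝ
  Cj : Fin n → ℝ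
  atoms : Finset ℝ
  w : ℝ → ℝ
  prob : IsProbabilityMeasure μ
  compactSupp : ∃ K : Set ℝ, IsCompact K ∧ μ Kᶜ = 0
  centered : ∫ x, x ∂μ = 0
  lt : ∀ j, Em j < Ep j
  disj : ∀ i j, i ≠ j → Disjoint (Set.Icc (Em i) (Ep i)) (Set.Icc (Em j) (Ep j))
  βm_mem : ∀ j, βm j ∈ Set.Ioo (-1 : ℝ) 1
  βp_mem : ∀ j, βp j ∈ Set.Ioo (-1 : ℝ) 1
  Cj_ge : ∀ j, 1 ≤ Cj j
  ρ_nonneg : ∀ x, 0 ≤ ρ x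
  ρ_supp : ∀ x, x ∉ ⋃ j, Set.Icc (Em j) (Ep j) → ρ x = 0
  powerLaw : ∀ j, ∀ᵐ E ∂(volume.restrict (Set.Icc (Em j) (Ep j))),
      (Cj j)⁻¹ * ((E - Em j) ^ (βm j) * (Ep j - E) ^ (βp j)) ≤ ρ E ∧
      ρ E ≤ Cj j * ((E - Em j) ^ (βm j) * (Ep j - E) ^ (βp j))
  w_nonneg : ∀ a, 0 ≤ w a
  decomp : μ = volume.withDensity (fun x => ENNReal.ofReal (ρ x))
      + ∑ a ∈ atoms, ENNReal.ofReal (w a) • Measure.dirac a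

/-- The support of the absolutely continuous part of `μ`. -/
def JacobiData.acSupport {μ : Measure ℝ} (d : JacobiData μ) : Set ℝ :=
  ⋃ j, Set.Icc (d.Em j) (d.Ep j)

/-- The Hölder condition (5.1)/(2.8) of the paper on the density of `μ_ac`. -/
def JacobiData.HolderCond {μ : Measure ℝ} (d : JacobiData μ) : Prop :=
  ∀ j, ∃ L γ : NNReal, 0 < γ ∧
    HolderOnWith L γ
      (fun E => d.ρ E / ((E - d.Em j) ^ (d.βm j) * (d.Ep j - E) ^ (d.βp j)))
      (Set.Icc (d.Em j) (d.Ep j))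

/-- Assumption 2 of the paper: a centered, absolutely continuous probability measure
supported on finitely many disjoint compact intervals, with density of Jacobi type. -/
structure AbsJacobiData (μ : Measure ℝ) where
  ρ : ℝ → ℝ
  n : ℕ
  npos : 0 < n
  Am : Fin n → ℝ
  Ap : Fin n → ℝ
  sm : Fin n → ℝ
  sp : Fin n → ℝ
  Cj : Fin n → ℝ
  prob : IsProbabilityMeasure μ
  centered : ∫ x, x ∂μ = 0
  lt : ∀ j, Am j < Ap j
  disj : ∀ i j, i ≠ j → Disjoint (Set.Icc (Am i) (Ap i)) (Set.Icc (Am j) (Ap j))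
  sm_mem : ∀ j, sm j ∈ Set.Ioo (-1 : ℝ) 1
  sp_mem : ∀ j, sp j ∈ Set.Ioo (-1 : ℝ) 1
  Cj_ge : ∀ j, 1 ≤ Cj j
  ρ_nonneg : ∀ x, 0 ≤ ρ x
  ρ_supp : ∀ x, x ∉ ⋃ j, Set.Icc (Am j) (Ap j) → ρ x = 0
  powerLaw : ∀ j, ∀ᵐ E ∂(volume.restrict (Set.Icc (Am j) (Ap j))),
      (Cj j)⁻¹ * ((E - Am j) ^ (sm j) * (Ap j - E) ^ (sp j)) ≤ ρ E ∧
      ρ E ≤ Cj j * ((E - Am j) ^ (sm j) * (Ap j - E) ^ (sp j))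
  decomp : μ = volume.withDensity (fun x => ENNReal.ofReal (ρ x))


section

/-- The properties of a measure which are used in the proof. -/
structure Good (μ : Measure ℝ) (S : Set ℝ) (R : ℝ) : Prop where
  prob : IsProbabilityMeasure μ
  closed : IsClosed S
  Rpos : 0 < R
  bdd : ∀ x ∈ S, |x| ≤ R
  supp : ∀ᵐ x ∂μ, x ∈ S
  noatom : ∀ x, μ {x} = 0
  centered : ∫ x, x ∂μ = 0
  dens : ∀ b ∈ S, ∀ N : ℝ, ∀ᶠ r in 𝓝[>] (0 : ℝ), N * r ^ 2 ≤ (μ (Metric.ball b r)).toReal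

lemma dens_right {b L C s t : ℝ} (hbL : b < L) (hC : 0 < C) (hs : s < 1) (N : ℝ) :
    ∀ᶠ E in 𝓝[>] b, N * (E - b) ≤ C * ((E - b) ^ s * (L - E) ^ t) := by
  have h1 : Tendsto (fun E : ℝ => E - b) (𝓝[>] b) (𝓝[>] 0) := by
    refine tendsto_nhdsWithin_iff.2 ⟨?_, ?_⟩
    · have : Tendsto (fun E : ℝ => E - b) (𝓝 b) (𝓝 (b - b)) := (continuous_sub_right b).tendsto b
      rw [sub_self] at this
      exact this.mono_left nhdsWithin_le_nhds
    · filter_upwards [self_mem_nhdsWithin] with E hE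
      simpa using hE
  have h2 : Tendsto (fun E : ℝ => (E - b) ^ (s - 1)) (𝓝[>] b) atTop :=
    (tendsto_rpow_neg_nhdsGT_zero (by linarith : s - 1 < 0)).comp h1
  have h3 : Tendsto (fun E : ℝ => C * (L - E) ^ t) (𝓝[>] b) (𝓝 (C * (L - b) ^ t)) := by
    have : ContinuousAt (fun E : ℝ => C * (L - E) ^ t) b := by
      refine continuousAt_const.mul (ContinuousAt.rpow_const (by fun_prop) (Or.inl ?_))
      linarith
    exact this.tendsto.mono_left nhdsWithin_le_nhds
  have hp : 0 < C * (L - b) ^ t := mul_pos hC (Real.rpow_pos_of_pos (by linarith) _)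
  have h4 := h2.atTop_mul_pos hp h3
  filter_upwards [h4.eventually_ge_atTop N, self_mem_nhdsWithin] with E hE hE'
  have hE0 : 0 < E - b := by simpa using hE'
  have h5 : (E - b) ^ s = (E - b) ^ (s - 1) * (E - b) := by
    rw [Real.rpow_sub_one hE0.ne']; field_simp
  rw [h5]
  nlinarith

lemma mass_of_dens {μ : Measure ℝ} [IsProbabilityMeasure μ] {ρ : ℝ → ℝ}
    (hd : μ = volume.withDensity (fun x => ENNReal.ofReal (ρ x))) {b c d r M : ℝ}
    (hM : 0 ≤ M) (hcd : c ≤ d) (hsub : Ioo c d ⊆ Metric.ball b r)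
    (h : ∀ᵐ E ∂(volume : Measure ℝ), E ∈ Ioo c d → M ≤ ρ E) :
    M * (d - c) ≤ (μ (Metric.ball b r)).toReal := by
  have h1 : ENNReal.ofReal (M * (d - c)) ≤ μ (Metric.ball b r) := by
    calc ENNReal.ofReal (M * (d - c)) = ∫⁻ _ in Ioo c d, ENNReal.ofReal M := by
          rw [lintegral_const, Measure.restrict_apply MeasurableSet.univ, univ_inter,
            Real.volume_Ioo, ENNReal.ofReal_mul hM]
      _ ≤ ∫⁻ x in Ioo c d, ENNReal.ofReal (ρ x) := by
          refine lintegral_mono_ae ?_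
          rw [ae_restrict_iff' measurableSet_Ioo]
          filter_upwards [h] with x hx hx'
          exact ENNReal.ofReal_le_ofReal (hx hx')
      _ = μ (Ioo c d) := by
          conv_rhs => rw [hd]
          rw [withDensity_apply _ measurableSet_Ioo]
      _ ≤ μ (Metric.ball b r) := measure_mono hsub
  have h2 := ENNReal.toReal_mono (measure_ne_top μ _) h1
  rwa [ENNReal.toReal_ofReal (by nlinarith)] at h2

lemma good_of_jacobi {μ : Measure ℝ} (d : AbsJacobiData μ) :
    ∃ S R, Good μ S R := by
  have := d.prob
  have hS : IsClosed (⋃ j, Icc (d.Am j) (d.Ap j)) :=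
    isClosed_iUnion_of_finite fun j => isClosed_Icc
  have hK : IsCompact (⋃ j, Icc (d.Am j) (d.Ap j)) := isCompact_iUnion fun j => isCompact_Icc
  obtain ⟨R, hR⟩ := hK.isBounded.exists_norm_le
  have hac : μ ≪ volume := by
    have := withDensity_absolutelyContinuous volume (fun x => ENNReal.ofReal (d.ρ x))
    rwa [← d.decomp] at this
  refine ⟨⋃ j, Icc (d.Am j) (d.Ap j), max R 1, d.prob, hS, by positivity,
    fun x hx => (hR x hx).trans (le_max_left _ _), ?_, fun x => hac (by simp), d.centered, ?_⟩
  · rw [ae_iff]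
    change μ (⋃ j, Icc (d.Am j) (d.Ap j))ᶜ = 0
    have h1 : μ (⋃ j, Icc (d.Am j) (d.Ap j))ᶜ =
        ∫⁻ x in (⋃ j, Icc (d.Am j) (d.Ap j))ᶜ, ENNReal.ofReal (d.ρ x) :=
      (congrArg (fun m : Measure ℝ => m (⋃ j, Icc (d.Am j) (d.Ap j))ᶜ) d.decomp).trans
        (withDensity_apply _ hS.measurableSet.compl)
    rw [h1]
    rw [setLIntegral_congr_fun (g := fun _ => 0) hS.measurableSet.compl]
    · simp
    · intro x hx
      simp [d.ρ_supp x hx]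
  · intro b hb N
    obtain ⟨j, hj⟩ := mem_iUnion.1 hb
    have hlt := d.lt j
    have hC : 0 < (d.Cj j)⁻¹ := inv_pos.2 (by linarith [d.Cj_ge j])
    have hpl := d.powerLaw j
    rw [ae_restrict_iff' measurableSet_Icc] at hpl
    set N' := 4 * max N 0 with hN'
    have hN0 : 0 ≤ N' := by positivity
    have hNN : N ≤ N' / 4 := by rw [hN']; linarith [le_max_left N 0]
    -- the right side
    by_cases hbp : b < d.Ap j
    · have key : ∀ᶠ E in 𝓝[>] b, N' * (E - b) ≤
          (d.Cj j)⁻¹ * ((E - d.Am j) ^ (d.sm j) * (d.Ap j - E) ^ (d.sp j)) := by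
        rcases eq_or_lt_of_le hj.1 with h | h
        · rw [h]; exact dens_right hbp hC (d.sm_mem j).2 N'
        · have hc : ContinuousAt (fun E => (d.Cj j)⁻¹ * ((E - d.Am j) ^ (d.sm j)
              * (d.Ap j - E) ^ (d.sp j)) - N' * (E - b)) b := by
            refine (continuousAt_const.mul ((ContinuousAt.rpow_const (by fun_prop)
              (Or.inl (by linarith))).mul (ContinuousAt.rpow_const (by fun_prop)
              (Or.inl (by linarith))))).sub (by fun_prop)
          have hp : 0 < (d.Cj j)⁻¹ * ((b - d.Am j) ^ (d.sm j)
              * (d.Ap j - b) ^ (d.sp j)) - N' * (b - b) := by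
            have := mul_pos hC (mul_pos (Real.rpow_pos_of_pos (by linarith : 0 < b - d.Am j) (d.sm j))
              (Real.rpow_pos_of_pos (by linarith : 0 < d.Ap j - b) (d.sp j)))
            simpa using this
          filter_upwards [nhdsWithin_le_nhds (hc.eventually (lt_mem_nhds hp))] with E hE
          linarith
      obtain ⟨u, hu, hu'⟩ := mem_nhdsGT_iff_exists_Ioo_subset.1 key
      have hu : b < u := hu
      filter_upwards [Ioo_mem_nhdsGT (show (0 : ℝ) < min (u - b) (d.Ap j - b) from
        lt_min (by linarith) (by linarith))] with r hr
      have hr1 := hr.1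
      have hr2 : r < u - b := lt_of_lt_of_le hr.2 (min_le_left _ _)
      have hr3 : r < d.Ap j - b := lt_of_lt_of_le hr.2 (min_le_right _ _)
      have := mass_of_dens d.decomp (b := b) (c := b + r / 2) (d := b + r) (r := r)
        (M := N' * (r / 2)) (by positivity) (by linarith) (by
          intro x hx
          rw [Metric.mem_ball, Real.dist_eq, abs_lt]
          constructor <;> linarith [hx.1, hx.2]) (by
          filter_upwards [hpl] with E hE hE'
          have h1 := (hE ⟨by linarith [hE'.1, hj.1], by linarith [hE'.2]⟩).1
          have h2 : N' * (E - b) ≤ _ := hu' ⟨by linarith [hE'.1], by linarith [hE'.2]⟩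
          refine le_trans ?_ (h2.trans h1)
          exact mul_le_mul_of_nonneg_left (by linarith [hE'.1]) hN0)
      refine le_trans ?_ this
      nlinarith [sq_nonneg r]
    · have hb' : b = d.Ap j := le_antisymm hj.2 (not_lt.1 hbp)
      have key : ∀ᶠ E in 𝓝[>] (-b), N' * (E - -b) ≤
          (d.Cj j)⁻¹ * ((E - -b) ^ (d.sp j) * (- d.Am j - E) ^ (d.sm j)) :=
        dens_right (by linarith) hC (d.sp_mem j).2 N'
      obtain ⟨u, hu, hu'⟩ := mem_nhdsGT_iff_exists_Ioo_subset.1 key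
      have hu : -b < u := hu
      filter_upwards [Ioo_mem_nhdsGT (show (0 : ℝ) < min (u + b) (b - d.Am j) from
        lt_min (by linarith) (by linarith))] with r hr
      have hr1 := hr.1
      have hr2 : r < u + b := lt_of_lt_of_le hr.2 (min_le_left _ _)
      have hr3 : r < b - d.Am j := lt_of_lt_of_le hr.2 (min_le_right _ _)
      have := mass_of_dens d.decomp (b := b) (c := b - r) (d := b - r / 2) (r := r)
        (M := N' * (r / 2)) (by positivity) (by linarith) (by
          intro x hx
          rw [Metric.mem_ball, Real.dist_eq, abs_lt]
          constructor <;> linarith [hx.1, hx.2]) (by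
          filter_upwards [hpl] with E hE hE'
          have h1 := (hE ⟨by linarith [hE'.1], by linarith [hE'.2]⟩).1
          have h2 : N' * (-E - -b) ≤ (d.Cj j)⁻¹ * ((-E - -b) ^ (d.sp j)
            * (- d.Am j - -E) ^ (d.sm j)) :=
            hu' ⟨by linarith [hE'.2], by linarith [hE'.1]⟩
          have h3 : -E - -b = d.Ap j - E := by rw [hb']; ring
          have h4 : - d.Am j - -E = E - d.Am j := by ring
          rw [h4, h3, mul_comm ((d.Ap j - E) ^ _)] at h2
          refine le_trans ?_ (h2.trans h1)
          exact mul_le_mul_of_nonneg_left (by linarith [hE'.2]) hN0)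
      refine le_trans ?_ this
      nlinarith [sq_nonneg r]

end

section

lemma sub_ne_of_im {ω : ℂ} (h : ω.im ≠ 0) (x : ℝ) : (x : ℂ) - ω ≠ 0 := by
  intro h0
  apply h
  have := congrArg Complex.im h0
  simpa using this

lemma im_sq_le_normSq (ω : ℂ) (x : ℝ) : ω.im ^ 2 ≤ Complex.normSq ((x : ℂ) - ω) := by
  rw [Complex.normSq_apply]; simp; nlinarith [sq_nonneg (x - ω.re)]

lemma cont_res {ω : ℂ} (h : ω.im ≠ 0) : Continuous fun x : ℝ => ((x : ℂ) - ω)⁻¹ :=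
  Continuous.inv₀ (by fun_prop) (sub_ne_of_im h)

lemma norm_res_le {ω : ℂ} (h : ω.im ≠ 0) (x : ℝ) : ‖((x : ℂ) - ω)⁻¹‖ ≤ |ω.im|⁻¹ := by
  rw [norm_inv]
  refine inv_anti₀ (abs_pos.2 h) ?_
  have := Complex.abs_im_le_norm ((x : ℂ) - ω)
  simpa using this

lemma int_res {μ : Measure ℝ} [IsFiniteMeasure μ] {ω : ℂ} (h : ω.im ≠ 0) :
    Integrable (fun x : ℝ => ((x : ℂ) - ω)⁻¹) μ :=
  Integrable.of_bound (cont_res h).aestronglyMeasurable _ (ae_of_all _ (norm_res_le h))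

lemma int_of_cont_bdd {μ : Measure ℝ} [IsFiniteMeasure μ] {E : Type*} [NormedAddCommGroup E]
    {f : ℝ → E}
    [SecondCountableTopologyEither ℝ E] (hf : Continuous f) (C : ℝ) (hC : ∀ x, ‖f x‖ ≤ C) :
    Integrable f μ := Integrable.of_bound hf.aestronglyMeasurable C (ae_of_all _ hC)

lemma int_nsq {μ : Measure ℝ} [IsFiniteMeasure μ] {ω : ℂ} (h : ω.im ≠ 0) :
    Integrable (fun x : ℝ => (Complex.normSq ((x : ℂ) - ω))⁻¹) μ := by
  refine int_of_cont_bdd ?_ (ω.im ^ 2)⁻¹ ?_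
  · refine Continuous.inv₀ (Complex.continuous_normSq.comp (by fun_prop)) fun x => ?_
    exact (Complex.normSq_pos.2 (sub_ne_of_im h x)).ne'
  · intro x
    have h2 : 0 < ω.im ^ 2 := by positivity
    rw [Real.norm_of_nonneg (inv_nonneg.2 (Complex.normSq_nonneg _))]
    exact inv_anti₀ h2 (im_sq_le_normSq ω x)

/-- `Im m(ω) = Im ω · I(ω)` -/
lemma im_mTr {μ : Measure ℝ} [IsFiniteMeasure μ] {ω : ℂ} (h : ω.im ≠ 0) :
    (mTr μ ω).im = ω.im * Inu μ ω := by
  have h1 : (mTr μ ω).im = ∫ x, (((x : ℂ) - ω)⁻¹).im ∂μ := by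
    unfold mTr
    have := (integral_im (int_res (μ := μ) h))
    simpa using this.symm
  rw [h1, Inu, ← integral_const_mul]
  congr 1
  ext x
  rw [Complex.inv_im]; simp [div_eq_mul_inv]

variable {μ : Measure ℝ} {S : Set ℝ} {R : ℝ}

lemma Inu_lower (G : Good μ S R) {ω : ℂ} (h : ω.im ≠ 0) :
    ((R + ‖ω‖) ^ 2)⁻¹ ≤ Inu μ ω := by
  have := G.prob
  have h1 : ∫ x, ((R + ‖ω‖) ^ 2)⁻¹ ∂μ = ((R + ‖ω‖) ^ 2)⁻¹ := by simp
  rw [← h1, Inu]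
  refine integral_mono_ae (integrable_const _) (int_nsq h) ?_
  filter_upwards [G.supp] with x hx
  refine inv_anti₀ (Complex.normSq_pos.2 (sub_ne_of_im h x)) ?_
  rw [Complex.normSq_eq_norm_sq]
  refine pow_le_pow_left₀ (norm_nonneg _) ?_ 2
  refine (norm_sub_le _ _).trans ?_
  have := G.bdd x hx
  simpa using this

lemma Inu_pos (G : Good μ S R) {ω : ℂ} (h : ω.im ≠ 0) : 0 < Inu μ ω := by
  have := G.Rpos
  exact lt_of_lt_of_le (by positivity) (Inu_lower G h)

lemma im_mTr_pos_iff (G : Good μ S R) {ω : ℂ} (h : 0 < (mTr μ ω).im) : 0 < ω.im := by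
  have := G.prob
  by_cases h0 : ω.im = 0
  · exfalso
    have : mTr μ ω = ((mTr μ ω).re : ℂ) := by
      have h2 : ω = (ω.re : ℂ) := by apply Complex.ext <;> simp [h0]
      have h3 : mTr μ ω = ((∫ x, (x - ω.re)⁻¹ ∂μ : ℝ) : ℂ) := by
        rw [mTr, ← integral_complex_ofReal]
        congr 1; ext x; rw [h2]; simp
      rw [h3]; simp
    rw [this] at h; simp at h
  · rw [im_mTr h0] at h
    exact pos_of_mul_pos_left h (Inu_pos G h0).le

lemma real_of_mTr_real (G : Good μ S R) {ω : ℂ} (h : (mTr μ ω).im = 0) : ω.im = 0 := by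
  have := G.prob
  by_contra h0
  rw [im_mTr h0] at h
  exact (mul_ne_zero h0 (Inu_pos G h0).ne') h

/-- variance -/
def Vv (μ : Measure ℝ) (ω : ℂ) : ℝ := Inu μ ω - Complex.normSq (mTr μ ω)

lemma int_dev {μ : Measure ℝ} [IsFiniteMeasure μ] {ω : ℂ} (h : ω.im ≠ 0) (m : ℂ) :
    Integrable (fun x : ℝ => Complex.normSq (((x : ℂ) - ω)⁻¹ - m)) μ := by
  refine int_of_cont_bdd (Complex.continuous_normSq.comp ((cont_res h).sub continuous_const))
    ((|ω.im|⁻¹ + ‖m‖) ^ 2) fun x => ?_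
  rw [Real.norm_of_nonneg (Complex.normSq_nonneg _), Complex.normSq_eq_norm_sq]
  refine pow_le_pow_left₀ (norm_nonneg _) ?_ 2
  exact (norm_sub_le _ _).trans (by gcongr; exact norm_res_le h x)

lemma Vv_eq {μ : Measure ℝ} [IsProbabilityMeasure μ] {ω : ℂ} (h : ω.im ≠ 0) :
    Vv μ ω = ∫ x : ℝ, Complex.normSq (((x : ℂ) - ω)⁻¹ - mTr μ ω) ∂μ := by
  set m := mTr μ ω with hm
  have e : ∀ x : ℝ, Complex.normSq (((x : ℂ) - ω)⁻¹ - m) =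
      (Complex.normSq ((x : ℂ) - ω))⁻¹ + Complex.normSq m
        - 2 * (((x : ℂ) - ω)⁻¹ * (starRingEnd ℂ) m).re := by
    intro x; rw [Complex.normSq_sub, Complex.normSq_inv]
  have i1 := int_nsq (μ := μ) h
  have i2 : Integrable (fun x : ℝ => ((x : ℂ) - ω)⁻¹ * (starRingEnd ℂ) m) μ :=
    (int_res h).mul_const _
  have i3 : Integrable (fun x : ℝ => (((x : ℂ) - ω)⁻¹ * (starRingEnd ℂ) m).re) μ := i2.re
  simp_rw [e]
  have j1 : Integrable (fun x : ℝ => (Complex.normSq ((x : ℂ) - ω))⁻¹ + Complex.normSq m) μ :=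
    i1.add (integrable_const _)
  rw [integral_sub j1 (i3.const_mul 2),
    integral_add i1 (integrable_const _), integral_const_mul]
  have h4 : ∫ x : ℝ, (((x : ℂ) - ω)⁻¹ * (starRingEnd ℂ) m).re ∂μ = Complex.normSq m := by
    have := integral_re i2
    have h5 : ∫ x : ℝ, (((x : ℂ) - ω)⁻¹ * (starRingEnd ℂ) m).re ∂μ
      = (∫ x : ℝ, (((x : ℂ) - ω)⁻¹ * (starRingEnd ℂ) m) ∂μ).re := by simpa using this
    rw [h5, integral_mul_const]
    change (m * _).re = _
    rw [Complex.mul_conj]; simp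
  rw [h4, Vv, ← hm, Inu]; simp; ring

lemma Vv_nonneg {μ : Measure ℝ} [IsProbabilityMeasure μ] {ω : ℂ} (h : ω.im ≠ 0) :
    0 ≤ Vv μ ω := by
  rw [Vv_eq h]; exact integral_nonneg fun x => Complex.normSq_nonneg _

lemma cs_int {μ : Measure ℝ} {f g : ℝ → ℂ}
    (hf : Integrable (fun x => Complex.normSq (f x)) μ)
    (hg : Integrable (fun x => Complex.normSq (g x)) μ)
    (hfg : Integrable (fun x => f x * g x) μ) :
    Complex.normSq (∫ x, f x * g x ∂μ) ≤
      (∫ x, Complex.normSq (f x) ∂μ) * (∫ x, Complex.normSq (g x) ∂μ) := by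
  set X := ∫ x, ‖f x * g x‖ ∂μ with hX
  have h1 : ‖∫ x, f x * g x ∂μ‖ ≤ X := norm_integral_le_integral_norm _
  have hX0 : 0 ≤ X := integral_nonneg fun x => norm_nonneg _
  have h2 : ∀ t : ℝ, 0 ≤ (∫ x, Complex.normSq (f x) ∂μ) * (t * t) + (-2 * X) * t +
      ∫ x, Complex.normSq (g x) ∂μ := by
    intro t
    have : (∫ x, Complex.normSq (f x) ∂μ) * (t * t) + (-2 * X) * t +
      ∫ x, Complex.normSq (g x) ∂μ = ∫ x, (t * ‖f x‖ - ‖g x‖) ^ 2 ∂μ := by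
      have e : ∀ x, (t * ‖f x‖ - ‖g x‖) ^ 2 = Complex.normSq (f x) * (t * t)
          + ‖f x * g x‖ * (-2 * t) + Complex.normSq (g x) := by
        intro x; rw [Complex.normSq_eq_norm_sq, Complex.normSq_eq_norm_sq, norm_mul]; ring
      simp_rw [e]
      have j1 : Integrable (fun x => Complex.normSq (f x) * (t * t)
          + ‖f x * g x‖ * (-2 * t)) μ := (hf.mul_const _).add (hfg.norm.mul_const _)
      rw [integral_add j1 hg,
        integral_add (hf.mul_const _) (hfg.norm.mul_const _), integral_mul_const,
        integral_mul_const]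
      ring
    rw [this]; exact integral_nonneg fun x => sq_nonneg _
  have h3 := discrim_le_zero h2
  rw [discrim] at h3
  rw [Complex.normSq_eq_norm_sq]
  nlinarith [norm_nonneg (∫ x, f x * g x ∂μ)]

lemma int_prod {μ : Measure ℝ} [IsFiniteMeasure μ] {w w' : ℂ} (h : w.im ≠ 0) (h' : w'.im ≠ 0)
    (m m' : ℂ) : Integrable (fun x : ℝ => (((x : ℂ) - w)⁻¹ - m) * (((x : ℂ) - w')⁻¹ - m')) μ := by
  refine int_of_cont_bdd (((cont_res h).sub continuous_const).mul
    ((cont_res h').sub continuous_const)) ((|w.im|⁻¹ + ‖m‖) * (|w'.im|⁻¹ + ‖m'‖)) fun x => ?_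
  rw [norm_mul]
  gcongr
  · exact (norm_sub_le _ _).trans (by gcongr; exact norm_res_le h x)
  · exact (norm_sub_le _ _).trans (by gcongr; exact norm_res_le h' x)

/-- covariance bound for `h(w) = F(w) - w` -/
lemma cov_bound {μ : Measure ℝ} [IsProbabilityMeasure μ] {w w' : ℂ} (h : w.im ≠ 0)
    (h' : w'.im ≠ 0) (hm : mTr μ w ≠ 0) (hm' : mTr μ w' ≠ 0) :
    Complex.normSq ((FTr μ w - w) - (FTr μ w' - w')) * (normSq (mTr μ w) * normSq (mTr μ w'))
      ≤ Complex.normSq (w - w') * (Vv μ w * Vv μ w') := by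
  set m := mTr μ w with hmd
  set m' := mTr μ w' with hmd'
  set Q := ∫ x : ℝ, (((x : ℂ) - w)⁻¹ - m) * (((x : ℂ) - w')⁻¹ - m') ∂μ with hQ
  have i0 : Integrable (fun x : ℝ => ((x : ℂ) - w)⁻¹ * ((x : ℂ) - w')⁻¹) μ := by
    simpa using int_prod (μ := μ) h h' 0 0
  have i1 := int_res (μ := μ) h
  have i2 := int_res (μ := μ) h'
  have e1 : Q = (∫ x : ℝ, ((x : ℂ) - w)⁻¹ * ((x : ℂ) - w')⁻¹ ∂μ) - m * m' := by
    have e : ∀ x : ℝ, (((x : ℂ) - w)⁻¹ - m) * (((x : ℂ) - w')⁻¹ - m') =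
      ((x : ℂ) - w)⁻¹ * ((x : ℂ) - w')⁻¹ - ((x : ℂ) - w)⁻¹ * m' - ((x : ℂ) - w')⁻¹ * m
        + m * m' := by intro x; ring
    simp_rw [hQ, e]
    have j1 : Integrable (fun x : ℝ => ((x : ℂ) - w)⁻¹ * ((x : ℂ) - w')⁻¹
      - ((x : ℂ) - w)⁻¹ * m') μ := i0.sub (i1.mul_const _)
    have j2 : Integrable (fun x : ℝ => ((x : ℂ) - w)⁻¹ * ((x : ℂ) - w')⁻¹
      - ((x : ℂ) - w)⁻¹ * m' - ((x : ℂ) - w')⁻¹ * m) μ := j1.sub (i2.mul_const _)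
    rw [integral_add j2 (integrable_const _),
      integral_sub j1 (i2.mul_const _),
      integral_sub i0 (i1.mul_const _), integral_mul_const, integral_mul_const]
    change _ - m * m' - m' * m + _ = _
    simp; ring
  have e2 : m - m' = (w - w') * ∫ x : ℝ, ((x : ℂ) - w)⁻¹ * ((x : ℂ) - w')⁻¹ ∂μ := by
    rw [hmd, hmd', mTr, mTr, ← integral_sub i1 i2, ← integral_const_mul]
    congr 1; ext x
    have := sub_ne_of_im h x
    have := sub_ne_of_im h' x
    field_simp; ring
  have e3 : ((FTr μ w - w) - (FTr μ w' - w')) * (m * m') = (w - w') * Q := by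
    rw [FTr, FTr, ← hmd, ← hmd']
    rw [e1, mul_sub, ← e2]
    field_simp; ring
  have e4 := cs_int (int_dev (μ := μ) h m) (int_dev (μ := μ) h' m') (int_prod h h' m m')
  rw [← Vv_eq h, ← Vv_eq h', ← hQ] at e4
  have e5 := congrArg Complex.normSq e3
  rw [map_mul, map_mul, map_mul] at e5
  rw [e5]
  exact mul_le_mul_of_nonneg_left e4 (Complex.normSq_nonneg _)

/-- the solution of the subordination system -/
structure Sol (μ ν : Measure ℝ) (w a z : ℂ) : Prop where
  im_z : 0 < z.im
  im_w : 0 < w.im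
  im_a : 0 < a.im
  eqm : mTr μ w = mTr ν a
  eqF : w + a - z = -(mTr μ w)⁻¹

variable {ν : Measure ℝ} {T : Set ℝ} {Q : ℝ}

lemma Sol.symm {w a z : ℂ} (h : Sol μ ν w a z) : Sol ν μ a w z :=
  ⟨h.im_z, h.im_a, h.im_w, h.eqm.symm, by rw [← h.eqm, ← h.eqF]; ring⟩

lemma Sol.im_m (G : Good μ S R) {w a z : ℂ} (h : Sol μ ν w a z) : 0 < (mTr μ w).im := by
  have := G.prob
  rw [im_mTr h.im_w.ne']; exact mul_pos h.im_w (Inu_pos G h.im_w.ne')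

lemma Sol.m_ne (G : Good μ S R) {w a z : ℂ} (h : Sol μ ν w a z) : mTr μ w ≠ 0 := by
  intro h0
  have := h.im_m G
  rw [h0] at this; simp at this

lemma Sol.Veq (G : Good μ S R) {w a z : ℂ} (h : Sol μ ν w a z) :
    Vv μ w * w.im = normSq (mTr μ w) * (a.im - z.im) := by
  have := G.prob
  have h1 := congrArg Complex.im h.eqF
  have h2 := im_mTr (μ := μ) h.im_w.ne'
  have hn : 0 < normSq (mTr μ w) := Complex.normSq_pos.2 (h.m_ne G)
  rw [Complex.neg_im, Complex.inv_im, neg_div, neg_neg, eq_div_iff hn.ne', h2] at h1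
  simp at h1
  rw [Vv]
  linarith

lemma Sol.AB (G : Good μ S R) (H : Good ν T Q) {w a z : ℂ} (h : Sol μ ν w a z) :
    Vv μ w * Vv ν a < normSq (mTr μ w) ^ 2 := by
  have := G.prob
  have := H.prob
  have h1 := h.Veq G
  have h2 := h.symm.Veq H
  rw [← h.eqm] at h2
  have hn : 0 < normSq (mTr μ w) := Complex.normSq_pos.2 (h.m_ne G)
  have v1 := Vv_nonneg (μ := μ) h.im_w.ne'
  have v2 := Vv_nonneg (μ := ν) h.im_a.ne'
  have hw := h.im_w
  have ha := h.im_a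
  have hz := h.im_z
  set n := normSq (mTr μ w)
  have h3 : (Vv μ w * Vv ν a) * (w.im * a.im) = n ^ 2 * ((a.im - z.im) * (w.im - z.im)) := by
    calc _ = (Vv μ w * w.im) * (Vv ν a * a.im) := by ring
      _ = _ := by rw [h1, h2]; ring
  have ha' : 0 ≤ a.im - z.im := by
    by_contra hc
    have : n * (a.im - z.im) < 0 := mul_neg_of_pos_of_neg hn (by linarith)
    nlinarith [mul_nonneg v1 hw.le]
  have h4 : (a.im - z.im) * (w.im - z.im) < w.im * a.im := by
    nlinarith
  have h5 : (Vv μ w * Vv ν a) * (w.im * a.im) < n ^ 2 * (w.im * a.im) := by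
    rw [h3]; exact mul_lt_mul_of_pos_left h4 (by positivity)
  exact lt_of_mul_lt_mul_right h5 (by positivity)

lemma Sol.unique (G : Good μ S R) (H : Good ν T Q) {w a w' a' z : ℂ} (h : Sol μ ν w a z)
    (h' : Sol μ ν w' a' z) : w = w' := by
  have := G.prob
  have := H.prob
  by_contra hne
  have k1 := cov_bound (μ := μ) h.im_w.ne' h'.im_w.ne' (h.m_ne G) (h'.m_ne G)
  have k2 := cov_bound (μ := ν) h.im_a.ne' h'.im_a.ne' (h.symm.m_ne H) (h'.symm.m_ne H)
  have e1 : (FTr μ w - w) - (FTr μ w' - w') = a - a' := by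
    rw [FTr, FTr, ← h.eqF, ← h'.eqF]; ring
  have e2 : (FTr ν a - a) - (FTr ν a' - a') = w - w' := by
    rw [FTr, FTr, ← h.eqm, ← h'.eqm, ← h.eqF, ← h'.eqF]; ring
  rw [e1] at k1
  rw [e2, ← h.eqm, ← h'.eqm] at k2
  have ab := h.AB G H
  have ab' := h'.AB G H
  have hn : 0 < normSq (mTr μ w) := Complex.normSq_pos.2 (h.m_ne G)
  have hn' : 0 < normSq (mTr μ w') := Complex.normSq_pos.2 (h'.m_ne G)
  have v1 := Vv_nonneg (μ := μ) h.im_w.ne'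
  have v2 := Vv_nonneg (μ := ν) h.im_a.ne'
  have v1' := Vv_nonneg (μ := μ) h'.im_w.ne'
  have v2' := Vv_nonneg (μ := ν) h'.im_a.ne'
  have hX : 0 < normSq (w - w') := Complex.normSq_pos.2 (sub_ne_zero.2 hne)
  have hY : 0 ≤ normSq (a - a') := Complex.normSq_nonneg _
  set n := normSq (mTr μ w)
  set n' := normSq (mTr μ w')
  set X := normSq (w - w')
  set Y := normSq (a - a')
  have hY' : 0 < Y := by
    rcases hY.eq_or_lt with h0 | h0
    · rw [← h0] at k2
      have : 0 < X * (n * n') := by positivity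
      linarith
    · exact h0
  have k3 : (Y * (n * n')) * (X * (n * n')) ≤ (X * (Vv μ w * Vv μ w')) * (Y * (Vv ν a * Vv ν a')) :=
    mul_le_mul k1 k2 (by positivity) (by positivity)
  have k4 : (Vv μ w * Vv ν a) * (Vv μ w' * Vv ν a') < n ^ 2 * n' ^ 2 :=
    mul_lt_mul'' ab ab' (by positivity) (by positivity)
  have k5 := mul_lt_mul_of_pos_left k4 (mul_pos hX hY')
  nlinarith

end

section

variable {μ : Measure ℝ} {S : Set ℝ} {R : ℝ}
variable {ν : Measure ℝ} {T : Set ℝ} {Q : ℝ}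

/-- second moment -/
def sig (μ : Measure ℝ) : ℝ := ∫ x, x ^ 2 ∂μ

lemma int_x (G : Good μ S R) : Integrable (fun x : ℝ => x) μ := by
  have := G.prob
  refine Integrable.of_bound (by fun_prop) R ?_
  filter_upwards [G.supp] with x hx using G.bdd x hx

lemma int_x2 (G : Good μ S R) : Integrable (fun x : ℝ => x ^ 2) μ := by
  have := G.prob
  refine Integrable.of_bound (by fun_prop) (R ^ 2) ?_
  filter_upwards [G.supp] with x hx
  rw [norm_pow]
  exact pow_le_pow_left₀ (norm_nonneg _) (G.bdd x hx) 2

lemma sig_pos (G : Good μ S R) : 0 < sig μ := by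
  have := G.prob
  have h0 : 0 ≤ sig μ := integral_nonneg fun x => sq_nonneg _
  refine lt_of_le_of_ne h0 fun h => ?_
  have h1 := (integral_eq_zero_iff_of_nonneg (fun x : ℝ => sq_nonneg x) (int_x2 G)).1 h.symm
  have h2 : ∀ᵐ x ∂μ, x ∈ ({0} : Set ℝ) := by
    filter_upwards [h1] with x hx
    simpa using hx
  have h3 : μ {(0 : ℝ)} = 1 := by
    rw [prob_compl_eq_zero_iff (measurableSet_singleton _) |>.symm]
    exact h2
  rw [G.noatom 0] at h3
  exact zero_ne_one h3

lemma Vv_lower (G : Good μ S R) {ω : ℂ} (h : ω.im ≠ 0) (hm : mTr μ ω ≠ 0) :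
    normSq (mTr μ ω) * sig μ ≤ Vv μ ω * (R + ‖ω‖) ^ 2 := by
  have := G.prob
  rw [Vv_eq h]
  set m := mTr μ ω with hmd
  set c := ω + m⁻¹ with hc
  have e1 : normSq m * sig μ = ∫ x, normSq m * (x ^ 2 - 2 * c.re * x) ∂μ := by
    rw [integral_const_mul, integral_sub (int_x2 G) ((int_x G).const_mul _), integral_const_mul,
      G.centered, sig]
    simp
  rw [e1, ← integral_mul_const]
  refine integral_mono_ae ?_ ((int_dev h m).mul_const _) ?_
  · exact ((int_x2 G).sub ((int_x G).const_mul _)).const_mul _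
  · filter_upwards [G.supp] with x hx
    have hne := sub_ne_of_im h x
    have e2 : ((x : ℂ) - ω)⁻¹ - m = - (m * ((x : ℂ) - c)) * ((x : ℂ) - ω)⁻¹ := by
      rw [hc]; field_simp; ring
    have hp := Complex.normSq_pos.2 hne
    have e3 : normSq ((x : ℂ) - ω) ≤ (R + ‖ω‖) ^ 2 := by
      rw [Complex.normSq_eq_norm_sq]
      refine pow_le_pow_left₀ (norm_nonneg _) ?_ 2
      refine (norm_sub_le _ _).trans ?_
      have := G.bdd x hx
      simpa using this
    have e4 : x ^ 2 - 2 * c.re * x ≤ normSq ((x : ℂ) - c) := by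
      rw [Complex.normSq_apply]; simp; nlinarith [sq_nonneg c.re, sq_nonneg c.im]
    rw [e2, map_mul, normSq_neg, map_mul, map_inv₀]
    have e5 : 1 ≤ (normSq ((x : ℂ) - ω))⁻¹ * (R + ‖ω‖) ^ 2 := by
      rw [inv_mul_eq_div, le_div_iff₀ hp]; linarith
    calc normSq m * (x ^ 2 - 2 * c.re * x) ≤ normSq m * normSq ((x : ℂ) - c) :=
          mul_le_mul_of_nonneg_left e4 (normSq_nonneg _)
      _ ≤ normSq m * normSq ((x : ℂ) - c) * ((normSq ((x : ℂ) - ω))⁻¹ * (R + ‖ω‖) ^ 2) :=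
          le_mul_of_one_le_right (mul_nonneg (normSq_nonneg _) (normSq_nonneg _)) e5
      _ = _ := by ring

lemma Inu_blow (G : Good μ S R) {b : ℝ} (hb : b ∈ S) (M : ℝ) :
    ∀ᶠ ω in 𝓝 (b : ℂ), 0 < ω.im → M ≤ Inu μ ω := by
  have := G.prob
  have h1 : Tendsto (fun ω : ℂ => ‖ω - b‖) (𝓝[≠] (b : ℂ)) (𝓝[>] 0) := by
    refine tendsto_nhdsWithin_iff.2 ⟨?_, ?_⟩
    · have : Tendsto (fun ω : ℂ => ‖ω - b‖) (𝓝 (b : ℂ)) (𝓝 ‖(b : ℂ) - b‖) :=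
        Continuous.tendsto (by fun_prop) _
      rw [sub_self, norm_zero] at this
      exact this.mono_left nhdsWithin_le_nhds
    · filter_upwards [self_mem_nhdsWithin] with ω hω
      simpa [sub_eq_zero] using hω
  have h2 := h1.eventually (G.dens b hb (4 * M))
  rw [eventually_nhdsWithin_iff] at h2
  filter_upwards [h2] with ω hω hi
  have hne : ω ≠ (b : ℂ) := by rintro rfl; simp at hi
  have h3 := hω hne
  set r := ‖ω - b‖ with hr
  have hr0 : 0 < r := by rw [hr]; exact norm_pos_iff.2 (sub_ne_zero.2 hne)
  have h4 : ((4 * r ^ 2)⁻¹) * (μ (Metric.ball b r)).toReal ≤ Inu μ ω := by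
    have e1 : ((4 * r ^ 2)⁻¹) * (μ (Metric.ball b r)).toReal
      = ∫ x, (Metric.ball b r).indicator (fun _ => (4 * r ^ 2)⁻¹) x ∂μ := by
      rw [integral_indicator measurableSet_ball]
      simp [Measure.real, mul_comm]
    rw [e1, Inu]
    refine integral_mono_ae ((integrable_const _).indicator measurableSet_ball) (int_nsq hi.ne') ?_
    refine ae_of_all _ fun x => ?_
    simp only [indicator]
    split_ifs with hx
    · refine inv_anti₀ (Complex.normSq_pos.2 (sub_ne_of_im hi.ne' x)) ?_
      rw [Complex.normSq_eq_norm_sq]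
      have h5 : ‖(x : ℂ) - ω‖ ≤ 2 * r := by
        have e : (x : ℂ) - ω = ((x - b : ℝ) : ℂ) - (ω - b) := by push_cast; ring
        rw [e]
        refine (norm_sub_le _ _).trans ?_
        rw [Metric.mem_ball, Real.dist_eq] at hx
        rw [Complex.norm_real, Real.norm_eq_abs]
        linarith
      nlinarith [norm_nonneg ((x : ℂ) - ω)]
    · exact inv_nonneg.2 (normSq_nonneg _)
  refine le_trans ?_ h4
  rw [inv_mul_eq_div, le_div_iff₀ (by positivity)]
  linarith

lemma ball_small (G : Good μ S R) (b : ℝ) {ε : ℝ} (hε : 0 < ε) :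
    ∃ δ > 0, (μ (Metric.ball b δ)).toReal ≤ ε := by
  have := G.prob
  have h1 : Tendsto (fun n : ℕ => μ (Metric.closedBall b (1 / ((n : ℝ) + 1)))) atTop
      (𝓝 (μ (⋂ n : ℕ, Metric.closedBall b (1 / ((n : ℝ) + 1))))) := by
    refine tendsto_measure_iInter_atTop (fun n => measurableSet_closedBall.nullMeasurableSet) ?_
      ⟨0, measure_ne_top _ _⟩
    intro i j hij
    exact Metric.closedBall_subset_closedBall (Nat.one_div_le_one_div hij)
  have h2 : (⋂ n : ℕ, Metric.closedBall b (1 / ((n : ℝ) + 1))) = {b} := by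
    ext x
    simp only [mem_iInter, Metric.mem_closedBall, mem_singleton_iff]
    constructor
    · intro h
      have : dist x b ≤ 0 := ge_of_tendsto' tendsto_one_div_add_atTop_nhds_zero_nat h
      exact dist_le_zero.1 this
    · rintro rfl n; simp; positivity
  rw [h2, G.noatom] at h1
  have h3 : (0 : ENNReal) < ENNReal.ofReal ε := by simpa using hε
  obtain ⟨n, hn⟩ := (h1.eventually (gt_mem_nhds h3)).exists
  refine ⟨1 / ((n : ℝ) + 1), by positivity, ?_⟩
  have h4 : μ (Metric.ball b (1 / ((n : ℝ) + 1))) ≤ ENNReal.ofReal ε :=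
    (measure_mono Metric.ball_subset_closedBall).trans hn.le
  exact ENNReal.toReal_le_of_le_ofReal hε.le h4

lemma m_small (G : Good μ S R) {b : ℝ} (hb : b ∈ S) {ε : ℝ} (hε : 0 < ε) :
    ∀ᶠ ω in 𝓝 (b : ℂ), 0 < ω.im → normSq (mTr μ ω) ≤ ε * Inu μ ω := by
  have := G.prob
  set η := Real.sqrt ε / 2 with hη
  have hη0 : 0 < η := by positivity
  have hηε : 4 * η ^ 2 = ε := by
    rw [hη, div_pow, Real.sq_sqrt hε.le]; ring
  obtain ⟨δ, hδ, hδ'⟩ := ball_small G b (show 0 < η ^ 2 by positivity)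
  set M := (4 / (δ * η)) ^ 2 with hM
  filter_upwards [Inu_blow G hb M, Metric.ball_mem_nhds (b : ℂ) (half_pos hδ)] with ω h1 h2 hi
  have h3 := h1 hi
  have hI : 0 < Inu μ ω := Inu_pos G hi.ne'
  set s := Real.sqrt (Inu μ ω) with hs
  have hs0 : 0 < s := Real.sqrt_pos.2 hI
  have hss : s ^ 2 = Inu μ ω := Real.sq_sqrt hI.le
  have hs1 : 4 / (δ * η) ≤ s := Real.le_sqrt_of_sq_le h3
  set t := η / s with ht
  have ht0 : 0 < t := by positivity
  have key : ‖mTr μ ω‖ ≤ t * Inu μ ω + (4 * t)⁻¹ * (μ (Metric.ball b δ)).toReal + 2 / δ := by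
    have e1 : (4 * t)⁻¹ * (μ (Metric.ball b δ)).toReal
      = ∫ x, (Metric.ball b δ).indicator (fun _ => (4 * t)⁻¹) x ∂μ := by
      rw [integral_indicator measurableSet_ball]
      simp [Measure.real, mul_comm]
    have i1 := (int_nsq (μ := μ) hi.ne').const_mul t
    have i2 : Integrable ((Metric.ball b δ).indicator (fun _ => (4 * t)⁻¹)) μ :=
      (integrable_const _).indicator measurableSet_ball
    have i12 : Integrable (fun x : ℝ => t * (normSq ((x : ℂ) - ω))⁻¹ +
      (Metric.ball b δ).indicator (fun _ => (4 * t)⁻¹) x) μ := i1.add i2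
    have e2 : t * Inu μ ω + (4 * t)⁻¹ * (μ (Metric.ball b δ)).toReal + 2 / δ =
      ∫ x : ℝ, (t * (normSq ((x : ℂ) - ω))⁻¹ +
        (Metric.ball b δ).indicator (fun _ => (4 * t)⁻¹) x) + 2 / δ ∂μ := by
      rw [integral_add i12 (integrable_const _), integral_add i1 i2, integral_const_mul, e1, Inu]
      simp
    rw [e2, mTr]
    refine (norm_integral_le_integral_norm _).trans ?_
    refine integral_mono_ae (int_res hi.ne').norm (i12.add (integrable_const _)) ?_
    refine ae_of_all _ fun x => ?_
    have hne := sub_ne_of_im hi.ne' x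
    have hnp := norm_pos_iff.2 hne
    simp only [indicator]
    have hd : 0 < 2 / δ := by positivity
    have e3 : (normSq ((x : ℂ) - ω))⁻¹ = ‖((x : ℂ) - ω)⁻¹‖ ^ 2 := by
      rw [Complex.normSq_eq_norm_sq, norm_inv, inv_pow]
    rw [e3]
    set y := ‖((x : ℂ) - ω)⁻¹‖ with hy
    split_ifs with hx
    · have : y ≤ t * y ^ 2 + (4 * t)⁻¹ := by
        have : t * y ^ 2 + (4 * t)⁻¹ - y = (2 * t * y - 1) ^ 2 / (4 * t) := by
          field_simp; ring
        have h6 : 0 ≤ (2 * t * y - 1) ^ 2 / (4 * t) := by positivity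
        linarith
      linarith
    · have h5 : δ / 2 ≤ ‖(x : ℂ) - ω‖ := by
        rw [Metric.mem_ball, Real.dist_eq, not_lt] at hx
        rw [Metric.mem_ball, dist_eq_norm] at h2
        have e : ((x - b : ℝ) : ℂ) = ((x : ℂ) - ω) + (ω - b) := by push_cast; ring
        have h7 := norm_add_le ((x : ℂ) - ω) (ω - b)
        rw [← e, Complex.norm_real, Real.norm_eq_abs] at h7
        linarith
      have h6 : y ≤ 2 / δ := by
        rw [hy, norm_inv]
        calc _ ≤ (δ / 2)⁻¹ := inv_anti₀ (by positivity) h5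
          _ = 2 / δ := by rw [inv_div]
      have : 0 ≤ t * y ^ 2 := by positivity
      linarith
  have k1 : t * Inu μ ω = η * s := by rw [← hss, ht]; field_simp
  have k2 : (4 * t)⁻¹ * (μ (Metric.ball b δ)).toReal ≤ η * s / 4 := by
    calc _ ≤ (4 * t)⁻¹ * η ^ 2 := by gcongr
      _ = η * s / 4 := by rw [ht]; field_simp
  have k3 : 2 / δ ≤ η * s / 2 := by
    rw [div_le_iff₀ (by positivity)] at hs1
    rw [div_le_iff₀ hδ]; linarith
  have k4 : ‖mTr μ ω‖ ≤ 2 * (η * s) := by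
    have : 0 < η * s := by positivity
    linarith
  rw [Complex.normSq_eq_norm_sq, ← hss, ← hηε]
  have := pow_le_pow_left₀ (norm_nonneg _) k4 2
  linarith

lemma mTr_far (G : Good μ S R) {ω : ℂ} (h : 2 * R ≤ ‖ω‖) :
    normSq (mTr μ ω) * (R + ‖ω‖) ^ 2 ≤ 9 := by
  have := G.prob
  have hR := G.Rpos
  have h1 : ‖mTr μ ω‖ ≤ (‖ω‖ - R)⁻¹ := by
    rw [mTr]
    have := norm_integral_le_of_norm_le_const (μ := μ) (f := fun x : ℝ => ((x : ℂ) - ω)⁻¹)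
      (C := (‖ω‖ - R)⁻¹) ?_
    · simpa using this
    · filter_upwards [G.supp] with x hx
      rw [norm_inv]
      refine inv_anti₀ (by linarith) ?_
      have := norm_sub_norm_le ω (x : ℂ)
      rw [norm_sub_rev] at this
      have h3 := G.bdd x hx
      rw [Complex.norm_real, Real.norm_eq_abs] at this
      linarith
  have h2 : ‖mTr μ ω‖ * (R + ‖ω‖) ≤ 3 := by
    calc _ ≤ (‖ω‖ - R)⁻¹ * (R + ‖ω‖) := by gcongr
      _ ≤ 3 := by
        rw [inv_mul_eq_div, div_le_iff₀ (by linarith)]; linarith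
  rw [Complex.normSq_eq_norm_sq, ← mul_pow]
  have := pow_le_pow_left₀ (by positivity) h2 2
  linarith

lemma avoid (G : Good μ S R) (H : Good ν T Q) {l : Filter ℂ} [l.NeBot] {wf af : ℂ → ℂ}
    (hsol : ∀ᶠ z in l, Sol μ ν (wf z) (af z) z) {b : ℝ} (hb : Tendsto wf l (𝓝 (b : ℂ)))
    (ha : (∃ a, Tendsto af l (𝓝 a)) ∨ Tendsto (fun z => ‖af z‖) l atTop) : b ∉ S := by
  intro hbS
  have := G.prob
  have := H.prob
  have hσ := sig_pos H
  have main : ∀ᶠ z in l, (Inu μ (wf z) - normSq (mTr μ (wf z))) * sig ν <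
      normSq (mTr μ (wf z)) * (Q + ‖af z‖) ^ 2 := by
    filter_upwards [hsol] with z hz
    have h1 := hz.AB G H
    have h2 := Vv_lower H hz.im_a.ne' (hz.symm.m_ne H)
    rw [← hz.eqm] at h2
    have hn : 0 < normSq (mTr μ (wf z)) := Complex.normSq_pos.2 (hz.m_ne G)
    have v1 := Vv_nonneg (μ := μ) hz.im_w.ne'
    change Vv μ (wf z) * sig ν < _
    set n := normSq (mTr μ (wf z))
    have hq : 0 < (Q + ‖af z‖) ^ 2 := by have := H.Rpos; positivity
    have h3 : n * (Vv μ (wf z) * sig ν) < n * (n * (Q + ‖af z‖) ^ 2) := by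
      calc _ = Vv μ (wf z) * (n * sig ν) := by ring
        _ ≤ Vv μ (wf z) * (Vv ν (af z) * (Q + ‖af z‖) ^ 2) := mul_le_mul_of_nonneg_left h2 v1
        _ = (Vv μ (wf z) * Vv ν (af z)) * (Q + ‖af z‖) ^ 2 := by ring
        _ < n ^ 2 * (Q + ‖af z‖) ^ 2 := mul_lt_mul_of_pos_right h1 hq
        _ = _ := by ring
    exact lt_of_mul_lt_mul_left h3 hn.le
  rcases ha with ⟨a, ha⟩ | ha
  · set K := (Q + (‖a‖ + 1)) ^ 2 with hK
    have hK0 : 0 < K := by have := H.Rpos; positivity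
    set ε := min (1 / 2) (sig ν / (2 * K)) with hε
    have hε0 : 0 < ε := lt_min (by norm_num) (by positivity)
    have hε1 : ε * K ≤ sig ν / 2 := by
      calc ε * K ≤ sig ν / (2 * K) * K := by gcongr; exact min_le_right _ _
        _ = sig ν / 2 := by field_simp
    have hε2 : ε ≤ 1 / 2 := min_le_left _ _
    have hn := ha.norm.eventually (ge_mem_nhds (show ‖a‖ < ‖a‖ + 1 by linarith))
    obtain ⟨z, hz, hm, h3, h4⟩ := (hsol.and (main.and ((hb.eventually
      (m_small G hbS hε0)).and hn))).exists
    have h5 := h3 hz.im_w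
    have hI : 0 < Inu μ (wf z) := Inu_pos G hz.im_w.ne'
    have h6 : (Q + ‖af z‖) ^ 2 ≤ K := by
      have := H.Rpos
      rw [hK]; gcongr
    set n := normSq (mTr μ (wf z))
    set I := Inu μ (wf z)
    have k1 : n * (Q + ‖af z‖) ^ 2 ≤ (ε * I) * K :=
      mul_le_mul h5 h6 (by positivity) (by positivity)
    have k2 : I / 2 ≤ I - n := by nlinarith
    have k3 : I / 2 * sig ν ≤ (I - n) * sig ν := by gcongr
    nlinarith
  · obtain ⟨z, hz, hm, h3, h4, h5⟩ := (hsol.and (main.and ((hb.eventually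
      (m_small G hbS (show (0 : ℝ) < 1 / 2 by norm_num))).and ((ha.eventually_ge_atTop (2 * Q)).and
        (hb.eventually (Inu_blow G hbS (18 / sig ν))))))).exists
    have h3 := h3 hz.im_w
    have h5 := h5 hz.im_w
    have h6 := mTr_far H h4
    rw [← hz.eqm] at h6
    rw [div_le_iff₀ hσ] at h5
    set n := normSq (mTr μ (wf z))
    set I := Inu μ (wf z)
    have k3 : I / 2 * sig ν ≤ (I - n) * sig ν := by
      apply mul_le_mul_of_nonneg_right _ hσ.le; linarith
    linarith

end

section

variable {μ : Measure ℝ} {S : Set ℝ} {R : ℝ}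
variable {ν : Measure ℝ} {T : Set ℝ} {Q : ℝ}

lemma half_le_norm {M : ℝ} (hM : 0 < M) {v c : ℂ} (hv : v ∈ Metric.ball (0 : ℂ) (2 * M)⁻¹)
    (hc : ‖c‖ ≤ M) : 1 / 2 ≤ ‖1 - v * c‖ := by
  have h1 : ‖v * c‖ ≤ 1 / 2 := by
    rw [norm_mul]
    rw [mem_ball_zero_iff] at hv
    calc ‖v‖ * ‖c‖ ≤ (2 * M)⁻¹ * M := by gcongr
      _ = 1 / 2 := by field_simp
  have h2 := norm_sub_norm_le (1 : ℂ) (v * c)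
  rw [norm_one] at h2
  linarith

lemma ana_int [IsFiniteMeasure μ] {f g : ℝ → ℂ} (hf : AEStronglyMeasurable f μ)
    (hg : AEStronglyMeasurable g μ) {M : ℝ} (hM : 0 < M) (hfM : ∀ᵐ x ∂μ, ‖f x‖ ≤ M)
    (hgM : ∀ᵐ x ∂μ, ‖g x‖ ≤ M) :
    (∀ v ∈ Metric.ball (0 : ℂ) (2 * M)⁻¹, Integrable (fun x => f x * (1 - v * g x)⁻¹) μ) ∧
    AnalyticAt ℂ (fun v => ∫ x, f x * (1 - v * g x)⁻¹ ∂μ) 0 ∧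
    HasDerivAt (fun v => ∫ x, f x * (1 - v * g x)⁻¹ ∂μ) (∫ x, f x * g x ∂μ) 0 := by
  have hmeas : ∀ v : ℂ, AEStronglyMeasurable (fun x => f x * (1 - v * g x)⁻¹) μ := by
    intro v
    have : AEMeasurable (fun x => f x * (1 - v * g x)⁻¹) μ :=
      hf.aemeasurable.mul ((hg.aemeasurable.const_mul v).const_sub 1).inv
    exact this.aestronglyMeasurable
  have hIntg : ∀ v ∈ Metric.ball (0 : ℂ) (2 * M)⁻¹,
      Integrable (fun x => f x * (1 - v * g x)⁻¹) μ := by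
    intro v hv
    refine Integrable.of_bound (hmeas v) (M * 2) ?_
    filter_upwards [hfM, hgM] with x hx hx'
    have := half_le_norm hM hv hx'
    rw [norm_mul, norm_inv]
    gcongr
    calc _ ≤ (1 / 2 : ℝ)⁻¹ := inv_anti₀ (by norm_num) this
      _ = 2 := by norm_num
  have hder : ∀ v ∈ Metric.ball (0 : ℂ) (2 * M)⁻¹,
      HasDerivAt (fun v => ∫ x, f x * (1 - v * g x)⁻¹ ∂μ)
        (∫ x, f x * (g x * ((1 - v * g x) ^ 2)⁻¹) ∂μ) v := by
    intro v hv
    refine (hasDerivAt_integral_of_dominated_loc_of_deriv_le (s := Metric.ball (0 : ℂ) (2 * M)⁻¹)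
      (F := fun v x => f x * (1 - v * g x)⁻¹)
      (F' := fun v x => f x * (g x * ((1 - v * g x) ^ 2)⁻¹)) (bound := fun _ => M * (M * 4))
      (Metric.isOpen_ball.mem_nhds hv) (Eventually.of_forall hmeas) (hIntg v hv) ?_ ?_
      (integrable_const _) ?_).2
    · have : AEMeasurable (fun x => f x * (g x * ((1 - v * g x) ^ 2)⁻¹)) μ :=
        hf.aemeasurable.mul (hg.aemeasurable.mul
          (((hg.aemeasurable.const_mul v).const_sub 1).pow_const 2).inv)
      exact this.aestronglyMeasurable
    · filter_upwards [hfM, hgM] with x hx hx' v hv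
      have := half_le_norm hM hv hx'
      rw [norm_mul, norm_mul, norm_inv, norm_pow]
      gcongr
      calc _ ≤ ((1 / 2 : ℝ) ^ 2)⁻¹ := by gcongr
        _ = 4 := by norm_num
    · filter_upwards [hfM, hgM] with x hx hx' v hv
      have h1 := half_le_norm hM hv hx'
      have h2 : 1 - v * g x ≠ 0 := by
        intro h; rw [h, norm_zero] at h1; linarith
      have h3 : HasDerivAt (fun v : ℂ => 1 - v * g x) (-(1 * g x)) v :=
        ((hasDerivAt_id v).mul_const (g x)).const_sub 1
      have h4 := (h3.inv h2).const_mul (f x)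
      have e : f x * (g x * ((1 - v * g x) ^ 2)⁻¹) = f x * (-(-(1 * g x)) / (1 - v * g x) ^ 2) := by
        rw [neg_neg, one_mul, div_eq_mul_inv]
      show HasDerivAt _ (f x * (g x * ((1 - v * g x) ^ 2)⁻¹)) v
      rw [e]; exact h4
  refine ⟨hIntg, ?_, ?_⟩
  · refine DifferentiableOn.analyticAt (s := Metric.ball (0 : ℂ) (2 * M)⁻¹) ?_
      (Metric.ball_mem_nhds _ (by positivity))
    intro v hv
    exact (hder v hv).differentiableAt.differentiableWithinAt
  · have := hder 0 (Metric.mem_ball_self (by positivity))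
    simpa using this

lemma inv_fun {f : ℂ → ℂ} {x : ℂ} (hf : AnalyticAt ℂ f x) (hf' : deriv f x ≠ 0) :
    ∃ g : ℂ → ℂ, AnalyticAt ℂ g (f x) ∧ g (f x) = x ∧ (∀ᶠ w in 𝓝 x, g (f w) = w) ∧
      (∀ᶠ m in 𝓝 (f x), f (g m) = m) ∧ HasDerivAt g (deriv f x)⁻¹ (f x) := by
  have hs := hf.hasStrictDerivAt
  refine ⟨hs.localInverse f _ x hf', hf.analyticAt_localInverse hf', ?_,
    hs.eventually_left_inverse hf', hs.eventually_right_inverse hf', ?_⟩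
  · exact (hs.eventually_left_inverse hf').self_of_nhds
  · exact (hs.to_localInverse hf').hasDerivAt

lemma chart_fin (G : Good μ S R) {b : ℝ} (hb : b ∉ S) :
    (mTr μ b).im = 0 ∧ AnalyticAt ℂ (mTr μ) b ∧
    ∃ g : ℂ → ℂ, AnalyticAt ℂ g (mTr μ b) ∧ g (mTr μ b) = b ∧
      (∀ᶠ w in 𝓝 (b : ℂ), g (mTr μ w) = w) ∧ (∀ᶠ m in 𝓝 (mTr μ b), mTr μ (g m) = m) := by
  have := G.prob
  obtain ⟨δ, hδ, hδ'⟩ := Metric.isOpen_iff.1 G.closed.isOpen_compl b hb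
  have hdist : ∀ x ∈ S, δ ≤ |x - b| := by
    intro x hx
    by_contra h
    exact hδ' (by rw [Metric.mem_ball, Real.dist_eq]; linarith) hx
  have hmeas : AEStronglyMeasurable (fun x : ℝ => ((x : ℂ) - b)⁻¹) μ := by
    have : Measurable (fun x : ℝ => ((x : ℂ) - b)⁻¹) := by fun_prop
    exact this.aestronglyMeasurable
  have hbd : ∀ᵐ x : ℝ ∂μ, ‖((x : ℂ) - b)⁻¹‖ ≤ δ⁻¹ := by
    filter_upwards [G.supp] with x hx
    rw [norm_inv]
    refine inv_anti₀ hδ ?_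
    rw [← Complex.ofReal_sub, Complex.norm_real]
    exact hdist x hx
  obtain ⟨hi, han, hder⟩ := ana_int hmeas hmeas (inv_pos.2 hδ) hbd hbd
  have heq : mTr μ = fun w => (fun v => ∫ x : ℝ, ((x : ℂ) - b)⁻¹ *
      (1 - v * ((x : ℂ) - b)⁻¹)⁻¹ ∂μ) (w - b) := by
    ext w
    rw [mTr]
    refine integral_congr_ae ?_
    filter_upwards [G.supp] with x hx
    have hne : (x : ℂ) - b ≠ 0 := by
      rw [← Complex.ofReal_sub]
      intro h
      have h1 : x - b = 0 := by exact_mod_cast h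
      have := hdist x hx
      rw [h1, abs_zero] at this; linarith
    rw [← mul_inv]
    congr 1
    field_simp
    ring
  have hb0 : (b : ℂ) - b = 0 := sub_self _
  have hAn : AnalyticAt ℂ (mTr μ) b := by
    rw [heq]
    refine AnalyticAt.comp (g := fun v => ∫ x : ℝ, ((x : ℂ) - b)⁻¹ *
      (1 - v * ((x : ℂ) - b)⁻¹)⁻¹ ∂μ) (f := fun w : ℂ => w - b) ?_ (by fun_prop)
    simpa using han
  have hDer : deriv (mTr μ) b = ∫ x : ℝ, ((x : ℂ) - b)⁻¹ * ((x : ℂ) - b)⁻¹ ∂μ := by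
    have h1 : HasDerivAt (fun w : ℂ => w - b) 1 (b : ℂ) := (hasDerivAt_id _).sub_const _
    have h2 : HasDerivAt (fun v => ∫ x : ℝ, ((x : ℂ) - b)⁻¹ *
      (1 - v * ((x : ℂ) - b)⁻¹)⁻¹ ∂μ) (∫ x : ℝ, ((x : ℂ) - b)⁻¹ * ((x : ℂ) - b)⁻¹ ∂μ)
        ((b : ℂ) - b) := by rw [hb0]; exact hder
    have h3 := HasDerivAt.comp (h := fun w : ℂ => w - b) (b : ℂ) h2 h1
    rw [mul_one] at h3
    rw [heq]
    exact h3.deriv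
  have hne : deriv (mTr μ) b ≠ 0 := by
    rw [hDer]
    have e : ∫ x : ℝ, ((x : ℂ) - b)⁻¹ * ((x : ℂ) - b)⁻¹ ∂μ =
        ((∫ x : ℝ, ((x - b) ^ 2)⁻¹ ∂μ : ℝ) : ℂ) := by
      rw [← integral_complex_ofReal]
      congr 1; ext x; push_cast; rw [sq, mul_inv]
    rw [e]
    have hR := G.Rpos
    have hpos : 0 < ∫ x : ℝ, ((x - b) ^ 2)⁻¹ ∂μ := by
      have h1 : ∫ x, ((R + |b|) ^ 2)⁻¹ ∂μ = ((R + |b|) ^ 2)⁻¹ := by simp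
      refine lt_of_lt_of_le (show 0 < ((R + |b|) ^ 2)⁻¹ by positivity) ?_
      rw [← h1]
      refine integral_mono_ae (integrable_const _) ?_ ?_
      · refine Integrable.of_bound (by fun_prop) (δ ^ 2)⁻¹ ?_
        filter_upwards [G.supp] with x hx
        rw [Real.norm_of_nonneg (by positivity)]
        rw [← sq_abs (x - b)]
        have := hdist x hx
        gcongr
      · filter_upwards [G.supp] with x hx
        have h2 := hdist x hx
        have h3 : |x - b| ≤ R + |b| := (abs_sub _ _).trans (by linarith [G.bdd x hx])
        have h4 : 0 < |x - b| := by linarith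
        rw [← sq_abs (x - b)]
        gcongr
    exact_mod_cast hpos.ne'
  obtain ⟨g, h1, h2, h3, h4, -⟩ := inv_fun hAn hne
  refine ⟨?_, hAn, g, h1, h2, h3, h4⟩
  have h3 : mTr μ b = ((∫ x, (x - b)⁻¹ ∂μ : ℝ) : ℂ) := by
    rw [mTr, ← integral_complex_ofReal]
    congr 1; ext x; simp
  rw [h3]; simp

lemma chart_inf (G : Good μ S R) :
    ∃ K : ℂ → ℂ, AnalyticAt ℂ K 0 ∧ K 0 = 0 ∧
      (∀ᶠ m in 𝓝[≠] (0 : ℂ), ∃ ω, mTr μ ω = m ∧ -m⁻¹ - ω = K m) ∧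
      (∀ᶠ w in Bornology.cobounded ℂ, K (mTr μ w) = FTr μ w - w) ∧
      Tendsto (mTr μ) (Bornology.cobounded ℂ) (𝓝 0) := by
  have := G.prob
  set M := max R 1 with hM
  have hM0 : 0 < M := by positivity
  have m1 : AEStronglyMeasurable (fun _ : ℝ => (1 : ℂ)) μ := aestronglyMeasurable_const
  have mx : AEStronglyMeasurable (fun x : ℝ => (x : ℂ)) μ := by fun_prop
  have b1 : ∀ᵐ x ∂μ, ‖(fun _ : ℝ => (1 : ℂ)) x‖ ≤ M :=
    ae_of_all _ fun x => by simp [hM]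
  have bx : ∀ᵐ x ∂μ, ‖(fun x : ℝ => (x : ℂ)) x‖ ≤ M := by
    filter_upwards [G.supp] with x hx
    rw [Complex.norm_real]
    exact (G.bdd x hx).trans (le_max_left _ _)
  obtain ⟨iq, aq, dq⟩ := ana_int m1 mx hM0 b1 bx
  obtain ⟨ip, ap, dp⟩ := ana_int mx mx hM0 bx bx
  set q : ℂ → ℂ := fun v => ∫ x : ℝ, 1 * (1 - v * (x : ℂ))⁻¹ ∂μ with hq
  set p : ℂ → ℂ := fun v => ∫ x : ℝ, (x : ℂ) * (1 - v * (x : ℂ))⁻¹ ∂μ with hp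
  have q0 : q 0 = 1 := by simp [hq]
  have p0 : p 0 = 0 := by
    simp only [hp, zero_mul, sub_zero, inv_one, mul_one]
    rw [integral_complex_ofReal, G.centered]; simp
  set n : ℂ → ℂ := fun u => -u * q u with hn
  have n0 : n 0 = 0 := by simp [hn]
  have an : AnalyticAt ℂ n 0 := (analyticAt_id.neg).mul aq
  have dn : deriv n 0 = -1 := by
    have h1 := ((hasDerivAt_id (0 : ℂ)).neg).mul dq
    have h2 : HasDerivAt n (-1 * q 0 + (-id 0) * ∫ x : ℝ, (1 : ℂ) * (x : ℂ) ∂μ) 0 := h1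
    rw [h2.deriv, q0]; simp
  have hnm : ∀ u : ℂ, u ≠ 0 → mTr μ u⁻¹ = n u := by
    intro u hu
    simp only [hn, hq, mTr]
    rw [← integral_const_mul]
    congr 1; ext x
    have : (x : ℂ) - u⁻¹ = -(u⁻¹) * (1 - u * x) := by field_simp; ring
    rw [this, mul_inv, inv_neg, inv_inv]; ring
  have hk : ∀ᶠ u in 𝓝 (0 : ℂ), u ≠ 0 → -(n u)⁻¹ - u⁻¹ = -p u / q u := by
    have hq1 : ∀ᶠ u in 𝓝 (0 : ℂ), q u ≠ 0 :=
      aq.continuousAt.eventually_ne (by rw [q0]; exact one_ne_zero)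
    filter_upwards [hq1, Metric.ball_mem_nhds (0 : ℂ) (show 0 < (2 * M)⁻¹ by positivity)]
      with u hqu hu hu0
    have e1 : q u - 1 = u * p u := by
      have e0 : (1 : ℂ) = ∫ x : ℝ, (1 : ℂ) ∂μ := by simp
      conv_lhs => rw [e0]
      simp only [hq, hp]
      rw [← integral_sub (iq u hu) (integrable_const _), ← integral_const_mul]
      refine integral_congr_ae ?_
      filter_upwards [bx] with x hx
      have h1 := half_le_norm hM0 hu hx
      have h2 : 1 - u * (x : ℂ) ≠ 0 := by
        intro h; rw [h, norm_zero] at h1; linarith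
      field_simp; ring
    have e2 : q u = 1 + u * p u := by rw [← e1]; ring
    simp only [hn]
    rw [neg_mul, inv_neg, neg_neg, mul_inv]
    field_simp
    rw [e2]; ring
  obtain ⟨U, aU, U0, hU1, hU2, -⟩ := inv_fun an (by rw [dn]; norm_num)
  rw [n0] at aU U0 hU2
  have hinv : Tendsto (fun w : ℂ => w⁻¹) (Bornology.cobounded ℂ) (𝓝 0) :=
    tendsto_inv₀_cobounded
  have hne : ∀ᶠ w in Bornology.cobounded ℂ, w ≠ (0 : ℂ) :=
    Bornology.eventually_ne_cobounded 0
  refine ⟨fun m => -p (U m) / q (U m), ?_, ?_, ?_, ?_, ?_⟩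
  · have ap' : AnalyticAt ℂ p (U 0) := by rw [U0]; exact ap
    have aq' : AnalyticAt ℂ q (U 0) := by rw [U0]; exact aq
    refine AnalyticAt.div ((ap'.comp aU).neg) (aq'.comp aU) ?_
    simp [U0, q0]
  · simp [U0, p0]
  · have hcU : Tendsto U (𝓝 0) (𝓝 0) := by
      have := aU.continuousAt.tendsto; rwa [U0] at this
    rw [eventually_nhdsWithin_iff]
    filter_upwards [hU2, hcU.eventually hk] with m h1 h2 hm
    have hu : U m ≠ 0 := by
      intro h; rw [h, n0] at h1; exact hm h1.symm
    refine ⟨(U m)⁻¹, by rw [hnm _ hu, h1], ?_⟩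
    rw [← h2 hu, h1]
  · filter_upwards [hne, hinv.eventually hk, hinv.eventually hU1] with w h0 h1 h2
    have h3 : mTr μ w = n w⁻¹ := by rw [← hnm _ (inv_ne_zero h0), inv_inv]
    rw [FTr, h3, h2, ← h1 (inv_ne_zero h0), inv_inv]
  · have h1 : Tendsto (fun w : ℂ => n w⁻¹) (Bornology.cobounded ℂ) (𝓝 0) := by
      have := an.continuousAt.tendsto.comp hinv; rwa [n0] at this
    refine h1.congr' ?_
    filter_upwards [hne] with w h0
    rw [← hnm _ (inv_ne_zero h0), inv_inv]

end

section

variable {μ : Measure ℝ} {S : Set ℝ} {R : ℝ}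
variable {ν : Measure ℝ} {T : Set ℝ} {Q : ℝ}

lemma exists_Z_aux (G : Good μ S R) (H : Good ν T Q) {l : Filter ℂ} [l.NeBot] {E0 b : ℝ}
    {wf af : ℂ → ℂ} (hsol : ∀ᶠ z in l, Sol μ ν (wf z) (af z) z)
    (hl : Tendsto id l (𝓝 (E0 : ℂ))) (hw : Tendsto wf l (𝓝 (b : ℂ))) (hb : b ∉ S)
    {K : ℂ → ℂ} (hK : AnalyticAt ℂ K (mTr μ b))
    (hK1 : ∀ᶠ m in 𝓝[≠] (mTr μ b), ∃ ω, mTr ν ω = m ∧ -m⁻¹ - ω = K m)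
    (hK2 : ∀ᶠ z in l, K (mTr ν (af z)) = FTr ν (af z) - af z) :
    ∃ (Z : ℂ → ℂ) (m0 : ℝ), AnalyticAt ℂ Z m0 ∧ Z m0 = E0 ∧
      (∀ᶠ m in 𝓝[≠] (m0 : ℂ), m.im = 0 → (Z m).im = 0) ∧
      (∀ᶠ m in 𝓝 (m0 : ℂ), 0 < m.im → 0 < (Z m).im →
        ∃ w a, Sol μ ν w a (Z m) ∧ mTr μ w = m) ∧
      (∃ᶠ m in 𝓝 (m0 : ℂ), 0 < m.im ∧ 0 < (Z m).im) := by
  obtain ⟨hreal, han, g, hg, hgb, hg1, hg2⟩ := chart_fin G hb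
  have hm0 : (((mTr μ b).re : ℝ) : ℂ) = mTr μ b := by
    apply Complex.ext <;> simp [hreal]
  have hmt : Tendsto (fun z => mTr μ (wf z)) l (𝓝 (mTr μ b)) := han.continuousAt.tendsto.comp hw
  have hZz : ∀ᶠ z in l, g (mTr μ (wf z)) - K (mTr μ (wf z)) = z := by
    filter_upwards [hsol, hK2, hw.eventually hg1] with z h1 h2 h3
    rw [h3, h1.eqm, h2, FTr, ← h1.eqm, ← h1.eqF]; ring
  refine ⟨fun m => g m - K m, (mTr μ b).re, ?_, ?_, ?_, ?_, ?_⟩ <;> rw [hm0]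
  · exact hg.sub hK
  · have h1 : Tendsto (fun z => g (mTr μ (wf z)) - K (mTr μ (wf z))) l
        (𝓝 (g (mTr μ b) - K (mTr μ b))) :=
      (hg.sub hK).continuousAt.tendsto.comp hmt
    exact tendsto_nhds_unique h1 (hl.congr' (hZz.mono fun z hz => hz.symm))
  · filter_upwards [hK1, nhdsWithin_le_nhds hg2] with m h1 h2 hm
    obtain ⟨ω, h3, h4⟩ := h1
    have h5 := real_of_mTr_real G (ω := g m) (by rw [h2]; exact hm)
    have h6 := real_of_mTr_real H (ω := ω) (by rw [h3]; exact hm)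
    rw [← h4]
    simp [h5, h6, Complex.inv_im, hm]
  · rw [eventually_nhdsWithin_iff] at hK1
    filter_upwards [hK1, hg2] with m h1 h2 hm hZ
    obtain ⟨ω, h3, h4⟩ := h1 (by
      intro h
      have : m = mTr μ b := h
      rw [this, hreal] at hm; exact lt_irrefl _ hm)
    refine ⟨g m, ω, ⟨hZ, ?_, ?_, ?_, ?_⟩, h2⟩
    · exact im_mTr_pos_iff G (by rw [h2]; exact hm)
    · exact im_mTr_pos_iff H (by rw [h3]; exact hm)
    · rw [h2, h3]
    · rw [h2, ← h4]; ring
  · refine hmt.frequently (Eventually.frequently ?_)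
    filter_upwards [hsol, hZz] with z h1 h2
    refine ⟨h1.im_m G, ?_⟩
    rw [h2]; exact h1.im_z

lemma exists_Z (G : Good μ S R) (H : Good ν T Q) {l : Filter ℂ} [l.NeBot] {E0 b : ℝ}
    {wf af : ℂ → ℂ} (hsol : ∀ᶠ z in l, Sol μ ν (wf z) (af z) z)
    (hl : Tendsto id l (𝓝 (E0 : ℂ))) (hw : Tendsto wf l (𝓝 (b : ℂ)))
    (ha : (∃ a : ℝ, Tendsto af l (𝓝 (a : ℂ))) ∨ Tendsto (fun z => ‖af z‖) l atTop) :
    ∃ (Z : ℂ → ℂ) (m0 : ℝ), AnalyticAt ℂ Z m0 ∧ Z m0 = E0 ∧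
      (∀ᶠ m in 𝓝[≠] (m0 : ℂ), m.im = 0 → (Z m).im = 0) ∧
      (∀ᶠ m in 𝓝 (m0 : ℂ), 0 < m.im → 0 < (Z m).im →
        ∃ w a, Sol μ ν w a (Z m) ∧ mTr μ w = m) ∧
      (∃ᶠ m in 𝓝 (m0 : ℂ), 0 < m.im ∧ 0 < (Z m).im) := by
  have hb : b ∉ S := avoid G H hsol hw (ha.imp (fun ⟨a, h⟩ => ⟨_, h⟩) id)
  have han := (chart_fin G hb).2.1
  have hmt : Tendsto (fun z => mTr μ (wf z)) l (𝓝 (mTr μ b)) := han.continuousAt.tendsto.comp hw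
  rcases ha with ⟨a, ha⟩ | ha
  · have ha' : a ∉ T := avoid H G (hsol.mono fun z h => h.symm) ha (Or.inl ⟨_, hw⟩)
    obtain ⟨-, han', g, hg, hgb, hg1, hg2⟩ := chart_fin H ha'
    have hmt' : Tendsto (fun z => mTr ν (af z)) l (𝓝 (mTr ν a)) :=
      han'.continuousAt.tendsto.comp ha
    have hmm : mTr μ b = mTr ν a :=
      tendsto_nhds_unique hmt (hmt'.congr' (hsol.mono fun z h => h.eqm.symm))
    have hne : mTr μ b ≠ 0 := by
      intro h0
      have h1 : Tendsto (fun z => (wf z + af z - z) * mTr μ (wf z)) l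
          (𝓝 (((b : ℂ) + a - E0) * mTr μ b)) := ((hw.add ha).sub hl).mul hmt
      have h2 : Tendsto (fun z => (wf z + af z - z) * mTr μ (wf z)) l (𝓝 (-1)) := by
        refine tendsto_const_nhds.congr' ?_
        filter_upwards [hsol] with z h
        have : mTr μ (wf z) ≠ 0 := by
          intro h'; have := h.im_m G; rw [h'] at this; simp at this
        rw [h.eqF, neg_mul, inv_mul_cancel₀ this]
      have h3 := tendsto_nhds_unique h1 h2
      rw [h0, mul_zero] at h3
      norm_num at h3
    rw [← hmm] at hg hg2
    refine exists_Z_aux G H hsol hl hw hb (K := fun m => -m⁻¹ - g m) ?_ ?_ ?_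
    · exact (analyticAt_id.inv hne).neg.sub hg
    · filter_upwards [nhdsWithin_le_nhds hg2] with m hm
      exact ⟨g m, hm, rfl⟩
    · filter_upwards [ha.eventually hg1] with z hz
      rw [hz, FTr]
  · have hco : Tendsto af l (Bornology.cobounded ℂ) := tendsto_norm_atTop_iff_cobounded.1 ha
    obtain ⟨K, hK, hK0, hK1, hK2, hK3⟩ := chart_inf H
    have hmm : mTr μ b = 0 :=
      tendsto_nhds_unique hmt ((hK3.comp hco).congr' (hsol.mono fun z h => h.eqm.symm))
    refine exists_Z_aux G H hsol hl hw hb (K := K) ?_ ?_ ?_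
    · rw [hmm]; exact hK
    · rw [hmm]; exact hK1
    · exact hco.eventually hK2

/-- both subordination functions cannot escape to infinity -/
lemma not_both_inf (G : Good μ S R) (H : Good ν T Q) {l : Filter ℂ} [l.NeBot] {E0 : ℝ}
    {wf af : ℂ → ℂ} (hsol : ∀ᶠ z in l, Sol μ ν (wf z) (af z) z)
    (hl : Tendsto id l (𝓝 (E0 : ℂ))) (hw : Tendsto (fun z => ‖wf z‖) l atTop)
    (ha : Tendsto (fun z => ‖af z‖) l atTop) : False := by
  have hco : Tendsto af l (Bornology.cobounded ℂ) := tendsto_norm_atTop_iff_cobounded.1 ha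
  obtain ⟨K, hK, hK0, hK1, hK2, hK3⟩ := chart_inf H
  have h1 : Tendsto (fun z => K (mTr ν (af z)) + z) l (𝓝 (K 0 + E0)) :=
    (hK.continuousAt.tendsto.comp (hK3.comp hco)).add hl
  have h2 : Tendsto wf l (𝓝 (K 0 + E0)) := by
    refine h1.congr' ?_
    filter_upwards [hsol, hco.eventually hK2] with z h h'
    rw [h', FTr, ← h.eqm, ← h.eqF]; ring
  exact not_tendsto_nhds_of_tendsto_atTop hw _ h2.norm

end

section

lemma pk_int (r : ℝ) {η : ℝ} (hη : 0 < η) :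
    Integrable (fun x : ℝ => η * ((x - r) ^ 2 + η ^ 2)⁻¹) ∧
    ∫ x : ℝ, η * ((x - r) ^ 2 + η ^ 2)⁻¹ = Real.pi := by
  have e : (fun x : ℝ => η * ((x - r) ^ 2 + η ^ 2)⁻¹) =
      fun x : ℝ => (fun y : ℝ => η⁻¹ * (1 + (η⁻¹ * y) ^ 2)⁻¹) (x - r) := by
    ext x
    have : (x - r) ^ 2 + η ^ 2 = η ^ 2 * (1 + (η⁻¹ * (x - r)) ^ 2) := by
      field_simp; ring
    rw [this, mul_inv]; simp only; field_simp
  have hi : Integrable (fun y : ℝ => η⁻¹ * (1 + (η⁻¹ * y) ^ 2)⁻¹) :=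
    (integrable_inv_one_add_sq.comp_mul_left' (inv_ne_zero hη.ne')).const_mul _
  rw [e]
  refine ⟨hi.comp_sub_right r, ?_⟩
  rw [integral_sub_right_eq_self (fun y : ℝ => η⁻¹ * (1 + (η⁻¹ * y) ^ 2)⁻¹) r,
    integral_const_mul,
    Measure.integral_comp_mul_left (fun y : ℝ => (1 + y ^ 2)⁻¹) η⁻¹, integral_univ_inv_one_add_sq]
  rw [inv_inv, abs_of_pos hη, smul_eq_mul]; field_simp

lemma im_mTr_dens {ν : Measure ℝ} [IsProbabilityMeasure ν] {ρ : ℝ → ℝ} (hc : Continuous ρ)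
    (hnn : ∀ x, 0 ≤ ρ x) (hd : ν = volume.withDensity (fun x => ENNReal.ofReal (ρ x))) :
    Integrable ρ ∧ ∫ x, ρ x = 1 ∧
    ∀ z : ℂ, 0 < z.im → (mTr ν z).im = ∫ x : ℝ, (z.im * ((x - z.re) ^ 2 + z.im ^ 2)⁻¹) * ρ x := by
  have hl : ∫⁻ x, ENNReal.ofReal (ρ x) = 1 := by
    have h1 : ν univ = 1 := measure_univ
    rw [hd, withDensity_apply _ MeasurableSet.univ, Measure.restrict_univ] at h1
    exact h1
  have hI : Integrable ρ := by
    refine ⟨hc.aestronglyMeasurable, ?_⟩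
    rw [hasFiniteIntegral_iff_ofReal (ae_of_all _ hnn), hl]; simp
  refine ⟨hI, ?_, ?_⟩
  · rw [integral_eq_lintegral_of_nonneg_ae (ae_of_all _ hnn) hc.aestronglyMeasurable, hl]; simp
  · intro z hz
    rw [im_mTr hz.ne', Inu, ← integral_const_mul, hd]
    rw [integral_withDensity_eq_integral_toReal_smul (by fun_prop)
      (ae_of_all _ fun x => ENNReal.ofReal_lt_top)]
    congr 1; ext x
    rw [ENNReal.toReal_ofReal (hnn x), smul_eq_mul, Complex.normSq_apply]
    simp
    ring

lemma poisson {ν : Measure ℝ} [IsProbabilityMeasure ν] {ρ : ℝ → ℝ} (hc : Continuous ρ)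
    (hnn : ∀ x, 0 ≤ ρ x) (hd : ν = volume.withDensity (fun x => ENNReal.ofReal (ρ x))) (E : ℝ) :
    Tendsto (fun z => (mTr ν z).im) (𝓝[{z : ℂ | 0 < z.im}] (E : ℂ)) (𝓝 (Real.pi * ρ E)) := by
  obtain ⟨hI, h1, hform⟩ := im_mTr_dens hc hnn hd
  have hbound : ∀ ε > 0, ∃ δ > 0, ∃ D > 0, ∀ z : ℂ, 0 < z.im → |z.re - E| < δ →
      |(mTr ν z).im - Real.pi * ρ E| ≤ ε * Real.pi + z.im * D := by
    intro ε hε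
    obtain ⟨δ, hδ, hδ'⟩ := Metric.continuous_iff.1 hc E ε hε
    have hρE := hnn E
    set D : ℝ := 1 + 4 / δ ^ 2 with hD
    have hD0 : 0 < D := by positivity
    refine ⟨δ / 2, by positivity, D * (1 + ρ E * Real.pi), by positivity, ?_⟩
    intro z hz hzE
    obtain ⟨pi1, pi2⟩ := pk_int z.re hz
    obtain ⟨qi1, qi2⟩ := pk_int z.re one_pos
    set P : ℝ → ℝ := fun x => z.im * ((x - z.re) ^ 2 + z.im ^ 2)⁻¹ with hP
    set q : ℝ → ℝ := fun x => 1 * ((x - z.re) ^ 2 + 1 ^ 2)⁻¹ with hq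
    have hPnn : ∀ x, 0 ≤ P x := fun x => by positivity
    have hqnn : ∀ x, 0 ≤ q x := fun x => by positivity
    have hPle : ∀ x, P x ≤ z.im⁻¹ := by
      intro x
      simp only [hP]
      calc z.im * ((x - z.re) ^ 2 + z.im ^ 2)⁻¹ ≤ z.im * (z.im ^ 2)⁻¹ := by
            gcongr; nlinarith [sq_nonneg (x - z.re)]
        _ = z.im⁻¹ := by field_simp
    have hPρ : Integrable (fun x => P x * ρ x) := by
      refine hI.bdd_mul (c := z.im⁻¹) pi1.aestronglyMeasurable (ae_of_all _ fun x => ?_)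
      rw [Real.norm_of_nonneg (hPnn x)]; exact hPle x
    have hPE : Integrable (fun x => P x * ρ E) := pi1.mul_const _
    have e : (mTr ν z).im - Real.pi * ρ E = ∫ x, (P x * ρ x - P x * ρ E) := by
      rw [integral_sub hPρ hPE, integral_mul_const, pi2, hform z hz]
    have hpt : ∀ x, |P x * ρ x - P x * ρ E| ≤
        ε * P x + (z.im * D) * ρ x + (z.im * D * ρ E) * q x := by
      intro x
      have hx := hnn x
      by_cases hxE : dist x E < δ
      · have h2 := hδ' x hxE
        rw [Real.dist_eq] at h2
        rw [← mul_sub, abs_mul, abs_of_nonneg (hPnn x)]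
        have h3 : 0 ≤ (z.im * D) * ρ x := by positivity
        have h4 : 0 ≤ (z.im * D * ρ E) * q x := mul_nonneg (by positivity) (hqnn x)
        have h5 := mul_le_mul_of_nonneg_left h2.le (hPnn x)
        linarith
      · have h2 : δ / 2 ≤ |x - z.re| := by
          rw [Real.dist_eq, not_lt] at hxE
          have : |x - E| ≤ |x - z.re| + |z.re - E| := abs_sub_le _ _ _
          linarith
        have h3 : (δ / 2) ^ 2 ≤ (x - z.re) ^ 2 := by
          rw [← sq_abs (x - z.re)]; gcongr
        have h4 : P x ≤ z.im * D * q x := by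
          simp only [hP, hq, one_mul]
          rw [mul_assoc]
          refine mul_le_mul_of_nonneg_left ?_ hz.le
          have h5 : 0 < (x - z.re) ^ 2 := lt_of_lt_of_le (by positivity) h3
          rw [← div_eq_mul_inv, inv_eq_one_div, div_le_div_iff₀ (by positivity) (by positivity)]
          have h6 : 1 ≤ 4 / δ ^ 2 * (x - z.re) ^ 2 := by
            rw [div_mul_eq_mul_div, le_div_iff₀ (by positivity)]; nlinarith
          have h7 : 0 ≤ 4 / δ ^ 2 * z.im ^ 2 := by positivity
          rw [hD]; nlinarith [sq_nonneg z.im]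
        have h5 : q x ≤ 1 := by
          simp only [hq, one_mul, one_pow]
          exact inv_le_one_of_one_le₀ (by nlinarith [sq_nonneg (x - z.re)])
        have h6 : P x ≤ z.im * D := h4.trans (by
          have : 0 ≤ z.im * D := by positivity
          nlinarith)
        have h7 := mul_le_mul_of_nonneg_right h6 hx
        have h8 := mul_le_mul_of_nonneg_right h4 hρE
        have h9 := mul_nonneg hε.le (hPnn x)
        have h10 := mul_nonneg (hPnn x) hx
        have h11 := mul_nonneg (hPnn x) hρE
        rw [abs_le]; constructor <;> nlinarith
    have i1 := pi1.const_mul ε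
    have i2 := hI.const_mul (z.im * D)
    have i3 := qi1.const_mul (z.im * D * ρ E)
    rw [e]
    calc |∫ x, (P x * ρ x - P x * ρ E)| ≤ ∫ x, |P x * ρ x - P x * ρ E| := abs_integral_le_integral_abs
      _ ≤ ∫ x, (ε * P x + (z.im * D) * ρ x + (z.im * D * ρ E) * q x) :=
          integral_mono (hPρ.sub hPE).abs ((i1.add i2).add i3) hpt
      _ = ε * Real.pi + (z.im * D) * 1 + (z.im * D * ρ E) * Real.pi := by
          have s1 := integral_add (i1.add i2) i3
          have s2 := integral_add i1 i2
          simp only [Pi.add_apply] at s1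
          have t1 : ∫ x, ε * P x = ε * ∫ x, P x := integral_const_mul ε P
          have t2 : ∫ x, (z.im * D) * ρ x = (z.im * D) * ∫ x, ρ x := integral_const_mul _ ρ
          have t3 : ∫ x, (z.im * D * ρ E) * q x = (z.im * D * ρ E) * ∫ x, q x :=
            integral_const_mul _ q
          rw [s1, s2, t1, t2, t3, pi2, qi2, h1]
      _ = _ := by ring
  rw [Metric.tendsto_nhds]
  intro ε hε
  have hpi := Real.pi_pos
  obtain ⟨δ, hδ, D, hD, hb⟩ := hbound (ε / (2 * Real.pi)) (by positivity)
  have hre : Tendsto (fun z : ℂ => |z.re - E|) (𝓝 (E : ℂ)) (𝓝 0) := by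
    have : Continuous fun z : ℂ => |z.re - E| := by fun_prop
    simpa using this.tendsto (E : ℂ)
  have him : Tendsto (fun z : ℂ => z.im * D) (𝓝 (E : ℂ)) (𝓝 0) := by
    have : Continuous fun z : ℂ => z.im * D := by fun_prop
    simpa using this.tendsto (E : ℂ)
  filter_upwards [self_mem_nhdsWithin, nhdsWithin_le_nhds (hre.eventually (gt_mem_nhds hδ)),
    nhdsWithin_le_nhds (him.eventually (gt_mem_nhds (show 0 < ε / 2 by positivity)))]
    with z hz h2 h3
  have := hb z hz h2
  rw [Real.dist_eq]
  have e : ε / (2 * Real.pi) * Real.pi = ε / 2 := by field_simp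
  linarith

end

section

lemma boundary {ρ : ℝ → ℝ} {M Z : ℂ → ℂ} {m0 : ℂ}
    (hP : ∀ E : ℝ, Tendsto (fun z => (M z).im) (𝓝[{z : ℂ | 0 < z.im}] (E : ℂ))
      (𝓝 (Real.pi * ρ E)))
    (hZ : AnalyticAt ℂ Z m0)
    (hu : ∀ᶠ m in 𝓝 m0, 0 < m.im → 0 < (Z m).im → M (Z m) = m) :
    ∀ᶠ m1 in 𝓝 m0, ∀ E : ℝ, Z m1 = E → (∃ᶠ m in 𝓝 m1, 0 < m.im ∧ 0 < (Z m).im) →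
      Real.pi * ρ E = m1.im := by
  filter_upwards [eventually_eventually_nhds.2 hu, hZ.eventually_analyticAt] with m1 h1 h2 E hE hf
  set l := 𝓝 m1 ⊓ 𝓟 {m : ℂ | 0 < m.im ∧ 0 < (Z m).im} with hl
  have : l.NeBot := frequently_mem_iff_neBot.1 hf
  have hmem : ∀ᶠ m in l, 0 < m.im ∧ 0 < (Z m).im := mem_inf_of_right (mem_principal_self _)
  have hle : l ≤ 𝓝 m1 := inf_le_left
  have t1 : Tendsto Z l (𝓝[{z : ℂ | 0 < z.im}] (E : ℂ)) := by
    refine tendsto_nhdsWithin_iff.2 ⟨?_, hmem.mono fun m h => h.2⟩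
    rw [← hE]; exact h2.continuousAt.tendsto.mono_left hle
  have t2 := (hP E).comp t1
  have t3 : Tendsto (fun m : ℂ => m.im) l (𝓝 m1.im) :=
    (Complex.continuous_im.tendsto m1).mono_left hle
  refine tendsto_nhds_unique t2 (t3.congr' ?_)
  filter_upwards [hmem, hle h1] with m h3 h4
  simp only [Function.comp]
  rw [h4 h3.1 h3.2]

lemma quad {χ : ℂ → ℂ} (h : AnalyticAt ℂ χ 0) (hd : HasDerivAt χ 1 0) :
    ∃ C > 0, ∀ᶠ u in 𝓝 (0 : ℂ), ‖χ u - χ 0 - u‖ ≤ C * ‖u‖ ^ 2 := by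
  obtain ⟨p, hp⟩ := h
  have h1 : AnalyticAt ℂ (dslope χ 0) 0 := ⟨_, hp.has_fpower_series_dslope_fslope⟩
  have h2 := h1.differentiableAt.isBigO_sub
  obtain ⟨C, hC, hb⟩ := h2.exists_pos
  refine ⟨C, hC, ?_⟩
  filter_upwards [hb.bound] with u hu
  rw [dslope_same, hd.deriv, sub_zero] at hu
  have h3 := sub_smul_dslope χ 0 u
  rw [sub_zero, smul_eq_mul] at h3
  rw [← h3, show u * dslope χ 0 u - u = u * (dslope χ 0 u - 1) by ring, norm_mul]
  nlinarith [norm_nonneg u]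

/-- normal form of an analytic function -/
lemma normal_form {g : ℂ → ℂ} {m0 κ : ℂ} (hg : AnalyticAt ℂ g m0) (hκ : g m0 = κ) (h0 : κ ≠ 0)
    {k : ℕ} (hk : k ≠ 0) :
    ∃ χ : ℂ → ℂ, AnalyticAt ℂ χ 0 ∧ χ 0 = m0 ∧ HasDerivAt χ 1 0 ∧
      ∀ᶠ u in 𝓝 (0 : ℂ), (χ u - m0) ^ k * g (χ u) = κ * u ^ k := by
  set φ : ℂ → ℂ := fun m => (g m / κ) ^ ((k : ℂ)⁻¹) with hφ
  have aφ : AnalyticAt ℂ φ m0 := by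
    refine AnalyticAt.cpow (hg.div analyticAt_const h0) analyticAt_const ?_
    rw [hκ, div_self h0]; exact Complex.one_mem_slitPlane
  have φ0 : φ m0 = 1 := by simp [hφ, hκ, div_self h0]
  have φk : ∀ m, (φ m) ^ k = g m / κ := fun m => Complex.cpow_nat_inv_pow _ hk
  set ψ : ℂ → ℂ := fun m => (m - m0) * φ m with hψ
  have aψ : AnalyticAt ℂ ψ m0 := (analyticAt_id.sub analyticAt_const).mul aφ
  have ψ0 : ψ m0 = 0 := by simp [hψ]
  have dψ : deriv ψ m0 = 1 := by
    have h1 := ((hasDerivAt_id m0).sub_const m0).mul aφ.differentiableAt.hasDerivAt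
    have h2 : HasDerivAt ψ (1 * φ m0 + (id m0 - m0) * deriv φ m0) m0 := h1
    rw [h2.deriv, φ0]; simp
  obtain ⟨χ, h1, h2, -, h4, h5⟩ := inv_fun aψ (by rw [dψ]; exact one_ne_zero)
  rw [ψ0] at h1 h2 h4 h5
  rw [dψ, inv_one] at h5
  refine ⟨χ, h1, h2, h5, ?_⟩
  filter_upwards [h4] with u hu
  have : u ^ k = (χ u - m0) ^ k * (g (χ u) / κ) := by
    conv_lhs => rw [← hu]
    simp only [hψ]; rw [mul_pow, φk]
  rw [this]; field_simp

lemma rot_pos {x : ℝ} (hx : x ≠ 0) {k : ℕ} (hk : k ≠ 0) :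
    ∀ᶠ t in 𝓝[>] (0 : ℝ), 0 < x * Real.sin (k * (t * x)) := by
  have hk' : (0 : ℝ) < k := by exact_mod_cast Nat.pos_of_ne_zero hk
  have ht : Tendsto (fun t : ℝ => (k : ℝ) * (t * |x|)) (𝓝 0) (𝓝 0) := by
    have : Continuous fun t : ℝ => (k : ℝ) * (t * |x|) := by fun_prop
    simpa using this.tendsto 0
  filter_upwards [self_mem_nhdsWithin,
    nhdsWithin_le_nhds (ht.eventually (gt_mem_nhds Real.pi_pos))] with t h1 h2
  have h1' : 0 < t := h1
  have hx' : 0 < |x| := abs_pos.2 hx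
  have h3 : 0 < Real.sin (k * (t * |x|)) := Real.sin_pos_of_pos_of_lt_pi (by positivity) h2
  rcases abs_cases x with ⟨e, -⟩ | ⟨e, -⟩
  · rw [e] at h3 hx'; positivity
  · rw [e] at h3 hx'
    rw [mul_neg, mul_neg, Real.sin_neg] at h3
    nlinarith

/-- density along a ray -/
lemma ray {ρ : ℝ → ℝ} {Z χ : ℂ → ℂ} {m0 κ E0 : ℝ} {k : ℕ} (hk : k ≠ 0) (hκ : κ ≠ 0)
    (hχ : AnalyticAt ℂ χ 0) (hχ0 : χ 0 = m0) {C : ℝ}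
    (hC : ∀ᶠ u in 𝓝 (0 : ℂ), ‖χ u - χ 0 - u‖ ≤ C * ‖u‖ ^ 2)
    (hZχ : ∀ᶠ u in 𝓝 (0 : ℂ), Z (χ u) = E0 + κ * u ^ k)
    (hB : ∀ᶠ m1 in 𝓝 (m0 : ℂ), ∀ E : ℝ, Z m1 = E →
      (∃ᶠ m in 𝓝 m1, 0 < m.im ∧ 0 < (Z m).im) → Real.pi * ρ E = m1.im)
    {v : ℂ} (hv : ‖v‖ = 1) (hvi : 0 < v.im) {σ : ℝ} (hσ : v ^ k = σ) :
    ∀ᶠ s in 𝓝[>] (0 : ℝ), |Real.pi * ρ (E0 + κ * σ * s ^ k) - s * v.im| ≤ C * s ^ 2 ∧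
      0 < ρ (E0 + κ * σ * s ^ k) := by
  have hσ0 : σ ≠ 0 := by
    intro h; rw [h] at hσ
    have : ‖v ^ k‖ = 0 := by rw [hσ]; simp
    rw [norm_pow, hv, one_pow] at this; norm_num at this
  have ht : Tendsto (fun s : ℝ => (s : ℂ) * v) (𝓝[>] 0) (𝓝 0) := by
    have : Continuous fun s : ℝ => (s : ℂ) * v := by fun_prop
    have h := this.tendsto 0
    simp only [Complex.ofReal_zero, zero_mul] at h
    exact h.mono_left nhdsWithin_le_nhds
  have hχt : Tendsto χ (𝓝 0) (𝓝 (m0 : ℂ)) := by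
    rw [← hχ0]; exact hχ.continuousAt.tendsto
  have hsm : ∀ᶠ s in 𝓝[>] (0 : ℝ), C * s < v.im := by
    have : Continuous fun s : ℝ => C * s := by fun_prop
    have h := this.tendsto 0
    simp only [mul_zero] at h
    exact nhdsWithin_le_nhds (h.eventually (gt_mem_nhds hvi))
  filter_upwards [self_mem_nhdsWithin, hsm, ht.eventually hC,
    ht.eventually (eventually_eventually_nhds.2 hZχ), ht.eventually (hχt.eventually hB),
    ht.eventually hχ.eventually_analyticAt] with s hs0 h1 h2 h3 h4 h5
  have hs : 0 < s := hs0
  have him : |(χ (s * v)).im - s * v.im| ≤ C * s ^ 2 := by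
    have e : (χ (s * v)).im - s * v.im = (χ (s * v) - χ 0 - s * v).im := by
      simp [hχ0]
    rw [e]
    refine (Complex.abs_im_le_norm _).trans (h2.trans ?_)
    rw [norm_mul, hv, Complex.norm_real, Real.norm_of_nonneg hs.le, mul_one]
  have hpos : 0 < (χ (s * v)).im := by
    have := (abs_le.1 him).1
    nlinarith
  have hE : Real.pi * ρ (E0 + κ * σ * s ^ k) = (χ (s * v)).im := by
    refine h4 _ ?_ ?_
    · rw [h3.self_of_nhds, mul_pow, hσ]; push_cast; ring
    · have tt : Tendsto (fun t : ℝ => (s : ℂ) * v * Complex.exp (((t * (κ * σ) : ℝ) : ℂ) * I))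
          (𝓝[>] 0) (𝓝 (s * v)) := by
        have : Continuous fun t : ℝ => (s : ℂ) * v *
          Complex.exp (((t * (κ * σ) : ℝ) : ℂ) * I) := by fun_prop
        have h := this.tendsto 0
        simp only [zero_mul, Complex.ofReal_zero, Complex.exp_zero, mul_one] at h
        exact h.mono_left nhdsWithin_le_nhds
      have tχ := h5.continuousAt.tendsto.comp tt
      refine tχ.frequently (Eventually.frequently ?_)
      have t6 := ((Complex.continuous_im.tendsto _).comp tχ).eventually (lt_mem_nhds hpos)
      filter_upwards [t6, tt.eventually h3, rot_pos (mul_ne_zero hκ hσ0) hk] with t h6 h7 h8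
      refine ⟨h6, ?_⟩
      simp only [Function.comp]
      rw [h7, mul_pow, mul_pow, hσ, ← Complex.exp_nat_mul]
      have e1 : (k : ℂ) * (((t * (κ * σ) : ℝ) : ℂ) * I) = ((k * (t * (κ * σ)) : ℝ) : ℂ) * I := by
        push_cast; ring
      have e2 : (κ : ℂ) * ((s : ℂ) ^ k * σ * Complex.exp (((k * (t * (κ * σ)) : ℝ) : ℂ) * I)) =
          ((κ * σ * s ^ k : ℝ) : ℂ) * Complex.exp (((k * (t * (κ * σ)) : ℝ) : ℂ) * I) := by
        push_cast; ring
      rw [e1, e2, Complex.add_im, Complex.ofReal_im, Complex.im_ofReal_mul,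
        Complex.exp_ofReal_mul_I_im, zero_add]
      have : 0 < s ^ k := by positivity
      calc 0 < (κ * σ * Real.sin (k * (t * (κ * σ)))) * s ^ k := by positivity
        _ = _ := by ring
  refine ⟨by rw [hE]; exact him, ?_⟩
  rw [← hE] at hpos
  exact (mul_pos_iff_of_pos_left Real.pi_pos).1 hpos

lemma half_line {f : ℝ → ℝ} {c C : ℝ} (hc : 0 < c) (hC : 0 < C)
    (h : ∀ᶠ s in 𝓝[>] (0 : ℝ), |Real.pi * f (c * s ^ 2) - s| ≤ C * s ^ 2 ∧ 0 < f (c * s ^ 2)) :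
    ∃ C1 > 0, ∃ K > 0, ∃ δ > 0, ∀ ε, 0 < ε → ε < δ →
      |f ε - C1 * Real.sqrt ε| ≤ K * ε ∧ 0 < f ε := by
  obtain ⟨s0, hs0, hs⟩ := mem_nhdsGT_iff_exists_Ioo_subset.1 h
  have hs0' : 0 < s0 := hs0
  have hpi := Real.pi_pos
  have hsc := Real.sqrt_pos.2 hc
  refine ⟨(Real.pi * Real.sqrt c)⁻¹, by positivity, C / (Real.pi * c), by positivity,
    c * s0 ^ 2, by positivity, ?_⟩
  intro ε hε hεδ
  have hs1 : 0 < Real.sqrt (ε / c) := Real.sqrt_pos.2 (by positivity)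
  have hs2 : Real.sqrt (ε / c) < s0 := by
    rw [Real.sqrt_lt' hs0', div_lt_iff₀ hc]; linarith
  have h1 := hs ⟨hs1, hs2⟩
  have e : Real.sqrt (ε / c) ^ 2 = ε / c := Real.sq_sqrt (by positivity)
  simp only [mem_ofPred_eq] at h1
  rw [e, mul_div_cancel₀ _ hc.ne'] at h1
  refine ⟨?_, h1.2⟩
  have e2 : f ε - (Real.pi * Real.sqrt c)⁻¹ * Real.sqrt ε =
      Real.pi⁻¹ * (Real.pi * f ε - Real.sqrt (ε / c)) := by
    rw [Real.sqrt_div hε.le]; field_simp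
  rw [e2, abs_mul, abs_of_pos (inv_pos.2 hpi)]
  calc Real.pi⁻¹ * |Real.pi * f ε - Real.sqrt (ε / c)| ≤ Real.pi⁻¹ * (C * (ε / c)) := by
        gcongr; exact h1.1
    _ = C / (Real.pi * c) * ε := by field_simp

end

section

lemma core_k1 {ρ : ℝ → ℝ} {Z : ℂ → ℂ} {m0 κ E0 : ℝ}
    (hs : HasStrictDerivAt Z (κ : ℂ) m0) (hκ : κ ≠ 0) (hZ0 : Z m0 = E0)
    (hre : ∀ᶠ m in 𝓝 (m0 : ℂ), m.im = 0 → (Z m).im = 0)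
    (hB : ∀ᶠ m1 in 𝓝 (m0 : ℂ), ∀ E : ℝ, Z m1 = E →
      (∃ᶠ m in 𝓝 m1, 0 < m.im ∧ 0 < (Z m).im) → Real.pi * ρ E = m1.im)
    (hf : ∃ᶠ m in 𝓝 (m0 : ℂ), 0 < m.im ∧ 0 < (Z m).im) :
    ∀ᶠ E in 𝓝 E0, ρ E = 0 := by
  have hκ' : 0 < |κ| := abs_pos.2 hκ
  have hb : ∀ᶠ p in 𝓝 ((m0 : ℂ), (m0 : ℂ)),
      ‖Z p.1 - Z p.2 - (p.1 - p.2) • (κ : ℂ)‖ ≤ |κ| / 2 * ‖p.1 - p.2‖ := by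
    have := hs.hasStrictFDerivAt.isLittleO.def (show 0 < |κ| / 2 by positivity)
    simpa using this
  have hret : Tendsto (fun m : ℂ => ((m.re : ℝ) : ℂ)) (𝓝 (m0 : ℂ)) (𝓝 (m0 : ℂ)) := by
    have : Continuous fun m : ℂ => ((m.re : ℝ) : ℂ) := by fun_prop
    simpa using this.tendsto (m0 : ℂ)
  have hpair : Tendsto (fun m : ℂ => (m, ((m.re : ℝ) : ℂ))) (𝓝 (m0 : ℂ))
      (𝓝 ((m0 : ℂ), (m0 : ℂ))) := tendsto_id.prodMk_nhds hret
  have hmain : ∀ᶠ m in 𝓝 (m0 : ℂ), 0 < m.im → |(Z m).im - κ * m.im| ≤ |κ| / 2 * m.im := by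
    filter_upwards [hpair.eventually hb, hret.eventually hre] with m h1 h2 hm
    have h3 : (Z (m.re : ℂ)).im = 0 := h2 (by simp)
    have e1 : m - (m.re : ℂ) = (m.im : ℂ) * I := by
      apply Complex.ext <;> simp
    have e2 : (Z m).im - κ * m.im =
        (Z m - Z (m.re : ℂ) - (m - (m.re : ℂ)) • (κ : ℂ)).im := by
      rw [e1]; simp [h3]; ring
    rw [e2]
    refine (Complex.abs_im_le_norm _).trans (h1.trans ?_)
    simp only [e1]
    rw [norm_mul, Complex.norm_I, Complex.norm_real, Real.norm_of_nonneg hm.le, mul_one]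
  have hκpos : 0 < κ := by
    obtain ⟨m, ⟨h1, h2⟩, h3⟩ := (hf.and_eventually hmain).exists
    have h4 := (abs_le.1 (h3 h1)).2
    by_contra hn
    have h5 : κ < 0 := lt_of_le_of_ne (not_lt.1 hn) hκ
    rw [abs_of_neg h5] at h4
    nlinarith
  rw [abs_of_pos hκpos] at hmain
  have hr := hs.real_of_complex
  have hmap := hr.map_nhds_eq (by simpa using hκ)
  have e0 : (Z (m0 : ℂ)).re = E0 := by rw [hZ0]; simp
  rw [e0] at hmap
  rw [← hmap, eventually_map]
  have hof : Tendsto (fun r : ℝ => (r : ℂ)) (𝓝 m0) (𝓝 (m0 : ℂ)) :=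
    Complex.continuous_ofReal.tendsto m0
  filter_upwards [hof.eventually hB, hof.eventually hre,
    hof.eventually (eventually_eventually_nhds.2 hmain)] with r h1 h2 h3
  have h4 := h1 (Z r).re (by
    apply Complex.ext
    · simp
    · simpa using h2 (by simp)) (by
    have tt : Tendsto (fun t : ℝ => (r : ℂ) + t * I) (𝓝[>] 0) (𝓝 (r : ℂ)) := by
      have : Continuous fun t : ℝ => (r : ℂ) + t * I := by fun_prop
      have h := this.tendsto 0
      simp only [zero_mul, Complex.ofReal_zero, add_zero] at h
      exact h.mono_left nhdsWithin_le_nhds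
    refine tt.frequently (Eventually.frequently ?_)
    filter_upwards [self_mem_nhdsWithin, tt.eventually h3] with t h5 h6
    have h5' : 0 < t := h5
    have e : ((r : ℂ) + t * I).im = t := by simp
    rw [e] at h6 ⊢
    have h7 := (abs_le.1 (h6 h5')).1
    refine ⟨h5', ?_⟩
    nlinarith [mul_pos hκpos h5'])
  simp only [Complex.ofReal_im] at h4
  exact (mul_eq_zero.1 h4).resolve_left Real.pi_ne_zero

lemma core {ρ : ℝ → ℝ} {M Z : ℂ → ℂ} {m0 E0 : ℝ} (hρ0 : ρ E0 = 0)
    (hP : ∀ E : ℝ, Tendsto (fun z => (M z).im) (𝓝[{z : ℂ | 0 < z.im}] (E : ℂ))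
      (𝓝 (Real.pi * ρ E)))
    (hZ : AnalyticAt ℂ Z m0) (hZ0 : Z m0 = E0)
    (hre : ∀ᶠ m in 𝓝[≠] (m0 : ℂ), m.im = 0 → (Z m).im = 0)
    (hu : ∀ᶠ m in 𝓝 (m0 : ℂ), 0 < m.im → 0 < (Z m).im → M (Z m) = m)
    (hf : ∃ᶠ m in 𝓝 (m0 : ℂ), 0 < m.im ∧ 0 < (Z m).im)
    (hfr : ¬ ∀ᶠ E in 𝓝 E0, ρ E = 0)
    (hext : ∃ ε₀ > (0 : ℝ), ∀ ε : ℝ, 0 < ε → ε < ε₀ → ρ (E0 - ε) = 0 ∨ ρ (E0 + ε) = 0) :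
    ∃ C1 > (0 : ℝ), ∃ K > (0 : ℝ), ∃ δ > (0 : ℝ),
      ((∀ E ∈ Set.Ioo E0 (E0 + δ),
          |ρ E - C1 * Real.sqrt (E - E0)| ≤ K * (E - E0)) ∧
        ∀ E ∈ Set.Ioc (E0 - δ) E0, ρ E = 0) ∨
      ((∀ E ∈ Set.Ioo (E0 - δ) E0,
          |ρ E - C1 * Real.sqrt (E0 - E)| ≤ K * (E0 - E)) ∧
        ∀ E ∈ Set.Ico E0 (E0 + δ), ρ E = 0) := by
  obtain ⟨ε₀, hε₀, hext⟩ := hext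
  have hB := boundary hP hZ hu
  have hnc : ¬ ∀ᶠ m in 𝓝 (m0 : ℂ), Z m - E0 = 0 := by
    intro h
    obtain ⟨m, ⟨-, h1⟩, h2⟩ := (hf.and_eventually h).exists
    rw [sub_eq_zero.1 h2] at h1; simp at h1
  have hZ' : AnalyticAt ℂ (fun m => Z m - E0) m0 := hZ.sub analyticAt_const
  obtain ⟨k, g, hg, hg0, hgk⟩ := hZ'.exists_eventuallyEq_pow_smul_nonzero_iff.2 hnc
  have hk : k ≠ 0 := by
    rintro rfl
    have := hgk.self_of_nhds
    simp [hZ0] at this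
    exact hg0 this.symm
  -- reality of the leading coefficient
  have hre' : ∀ᶠ m in 𝓝 (m0 : ℂ), m.im = 0 → (Z m).im = 0 := by
    rw [eventually_nhdsWithin_iff] at hre
    filter_upwards [hre] with m h1 h2
    by_cases h : m = m0
    · rw [h, hZ0]; simp
    · exact h1 h h2
  have hgim : (g m0).im = 0 := by
    have t1 : Tendsto (fun r : ℝ => (r : ℂ)) (𝓝[≠] m0) (𝓝 (m0 : ℂ)) :=
      (Complex.continuous_ofReal.tendsto m0).mono_left nhdsWithin_le_nhds
    have t2 : Tendsto (fun r : ℝ => (g r).im) (𝓝[≠] m0) (𝓝 (g m0).im) :=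
      (Complex.continuous_im.tendsto _).comp (hg.continuousAt.tendsto.comp t1)
    refine tendsto_nhds_unique t2 (tendsto_const_nhds.congr' ?_)
    filter_upwards [self_mem_nhdsWithin, t1.eventually hre', t1.eventually hgk] with r h1 h2 h3
    have h4 : (Z r).im = 0 := h2 (by simp)
    have h5 : r - m0 ≠ 0 := sub_ne_zero.2 h1
    have h6 : ((Z r - E0 : ℂ)).im = (r - m0) ^ k * (g r).im := by
      rw [h3, smul_eq_mul, ← Complex.ofReal_sub, ← Complex.ofReal_pow, Complex.im_ofReal_mul]
    rw [Complex.sub_im, h4, Complex.ofReal_im, sub_zero] at h6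
    exact ((mul_eq_zero.1 h6.symm).resolve_left (pow_ne_zero _ h5)).symm
  obtain ⟨κ, hκ⟩ : ∃ κ : ℝ, g m0 = κ := ⟨(g m0).re, by apply Complex.ext <;> simp [hgim]⟩
  have hκ0 : κ ≠ 0 := by
    rintro rfl; exact hg0 (by rw [hκ]; simp)
  by_cases hk1 : k = 1
  · exfalso
    apply hfr
    subst hk1
    refine core_k1 (κ := κ) ?_ hκ0 hZ0 hre' hB hf
    have hd : deriv Z m0 = κ := by
      have h1 : Z =ᶠ[𝓝 (m0 : ℂ)] fun m => E0 + (m - m0) * g m := by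
        filter_upwards [hgk] with m hm
        rw [pow_one, smul_eq_mul] at hm
        rw [← hm]; ring
      have h2 := (((hasDerivAt_id (m0 : ℂ)).sub_const (m0 : ℂ)).mul
        hg.differentiableAt.hasDerivAt).const_add (E0 : ℂ)
      have h3 : HasDerivAt (fun m => E0 + (m - m0) * g m)
        (1 * g m0 + (id (m0 : ℂ) - m0) * deriv g m0) m0 := h2
      rw [h1.deriv_eq, h3.deriv, hκ]; simp
    have := hZ.hasStrictDerivAt
    rwa [hd] at this
  obtain ⟨χ, aχ, χ0, dχ, hχ⟩ := normal_form hg hκ (by exact_mod_cast hκ0) hk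
  obtain ⟨C, hC, hCq⟩ := quad aχ dχ
  have hχt : Tendsto χ (𝓝 0) (𝓝 (m0 : ℂ)) := by
    rw [← χ0]; exact aχ.continuousAt.tendsto
  have hZχ : ∀ᶠ u in 𝓝 (0 : ℂ), Z (χ u) = E0 + κ * u ^ k := by
    filter_upwards [hχ, hχt.eventually hgk] with u h1 h2
    rw [smul_eq_mul, h1] at h2
    rw [← h2]; ring
  by_cases hk2 : k = 2
  · subst hk2
    have hr := ray (ρ := ρ) hk hκ0 aχ χ0 hCq hZχ hB (v := I) (by simp) (by simp) (σ := -1)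
      (by simp)
    rcases lt_or_gt_of_ne hκ0 with hneg | hpos
    · obtain ⟨C1, hC1, K, hK, δ, hδ, hh⟩ := half_line (f := fun ε => ρ (E0 + ε))
        (neg_pos.2 hneg) hC (by
          filter_upwards [hr] with s hs
          have e : E0 + κ * -1 * s ^ 2 = E0 + -κ * s ^ 2 := by ring
          rw [e, Complex.I_im, mul_one] at hs
          exact hs)
      refine ⟨C1, hC1, K, hK, min δ ε₀, lt_min hδ hε₀, Or.inl ⟨?_, ?_⟩⟩
      · intro E hE
        have h1 := hh (E - E0) (by linarith [hE.1])
          (by linarith [hE.2, min_le_left δ ε₀])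
        simpa using h1.1
      · intro E hE
        rcases hE.2.eq_or_lt with h | h
        · rw [h]; exact hρ0
        · have h0 : 0 < E0 - E := by linarith
          have h1 := hh (E0 - E) h0 (by linarith [hE.1, min_le_left δ ε₀])
          have h2 := hext (E0 - E) h0 (by linarith [hE.1, min_le_right δ ε₀])
          rcases h2 with h2 | h2
          · simpa using h2
          · exact absurd h2 h1.2.ne'
    · obtain ⟨C1, hC1, K, hK, δ, hδ, hh⟩ := half_line (f := fun ε => ρ (E0 - ε))
        hpos hC (by
          filter_upwards [hr] with s hs
          have e : E0 + κ * -1 * s ^ 2 = E0 - κ * s ^ 2 := by ring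
          rw [e, Complex.I_im, mul_one] at hs
          exact hs)
      refine ⟨C1, hC1, K, hK, min δ ε₀, lt_min hδ hε₀, Or.inr ⟨?_, ?_⟩⟩
      · intro E hE
        have h1 := hh (E0 - E) (by linarith [hE.2])
          (by linarith [hE.1, min_le_left δ ε₀])
        simpa using h1.1
      · intro E hE
        rcases hE.1.eq_or_lt with h | h
        · rw [← h]; exact hρ0
        · have h0 : 0 < E - E0 := by linarith
          have h1 := hh (E - E0) h0 (by linarith [hE.2, min_le_left δ ε₀])
          have h2 := hext (E - E0) h0 (by linarith [hE.2, min_le_right δ ε₀])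
          rcases h2 with h2 | h2
          · exact absurd h2 h1.2.ne'
          · simpa using h2
  exfalso
  have hk3 : 3 ≤ k := by omega
  have hkr : (3 : ℝ) ≤ k := by exact_mod_cast hk3
  have hkp : (0 : ℝ) < k := by linarith
  have hpi := Real.pi_pos
  have hkc : (k : ℂ) ≠ 0 := by exact_mod_cast hk
  have hray : ∀ (θ : ℝ), 0 < θ → θ < Real.pi → ∀ σ : ℝ,
      Complex.exp (((k * θ : ℝ) : ℂ) * I) = σ →
      ∀ᶠ s in 𝓝[>] (0 : ℝ), 0 < ρ (E0 + κ * σ * s ^ k) := by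
    intro θ h1 h2 σ hσ
    have := ray (ρ := ρ) hk hκ0 aχ χ0 hCq hZχ hB (v := Complex.exp ((θ : ℂ) * I))
      (Complex.norm_exp_ofReal_mul_I θ)
      (by rw [Complex.exp_ofReal_mul_I_im]; exact Real.sin_pos_of_pos_of_lt_pi h1 h2)
      (σ := σ) (by rw [← hσ, ← Complex.exp_nat_mul]; congr 1; push_cast; ring)
    exact this.mono fun s hs => hs.2
  have r1 := hray (Real.pi / k) (by positivity) (by rw [div_lt_iff₀ hkp]; nlinarith) (-1) (by
    rw [mul_div_cancel₀ _ hkp.ne', Complex.exp_pi_mul_I]; simp)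
  have r2 := hray (2 * Real.pi / k) (by positivity) (by rw [div_lt_iff₀ hkp]; nlinarith) 1 (by
    rw [mul_div_cancel₀ _ hkp.ne']
    push_cast
    rw [Complex.exp_two_pi_mul_I])
  have hsm : ∀ᶠ s in 𝓝[>] (0 : ℝ), |κ| * s ^ k < ε₀ := by
    have : Continuous fun s : ℝ => |κ| * s ^ k := by fun_prop
    have h := this.tendsto 0
    simp only [zero_pow hk, mul_zero] at h
    exact nhdsWithin_le_nhds (h.eventually (gt_mem_nhds hε₀))
  obtain ⟨s, ⟨⟨h1, h2⟩, h3⟩, h4⟩ := (((r1.and r2).and hsm).and self_mem_nhdsWithin).exists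
  have h4' : 0 < s := h4
  have hκa : 0 < |κ| := abs_pos.2 hκ0
  have h5 := hext (|κ| * s ^ k) (by positivity) h3
  rcases abs_cases κ with ⟨e, -⟩ | ⟨e, -⟩
  · rw [e] at h5
    rw [show E0 + κ * -1 * s ^ k = E0 - κ * s ^ k by ring] at h1
    rw [show E0 + κ * 1 * s ^ k = E0 + κ * s ^ k by ring] at h2
    rcases h5 with h5 | h5 <;> linarith
  · rw [e] at h5
    rw [show E0 + κ * -1 * s ^ k = E0 + -κ * s ^ k by ring] at h1
    rw [show E0 + κ * 1 * s ^ k = E0 - -κ * s ^ k by ring] at h2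
    rcases h5 with h5 | h5 <;> linarith

end

section

lemma ultra_dich (l : Ultrafilter ℂ) (f : ℂ → ℂ) :
    (∃ a, Tendsto f l (𝓝 a)) ∨ Tendsto (fun z => ‖f z‖) l atTop := by
  by_cases h : ∃ r : ℝ, ∀ᶠ z in l, ‖f z‖ ≤ r
  · left
    obtain ⟨r, hr⟩ := h
    have hc : IsCompact (Metric.closedBall (0 : ℂ) r) := isCompact_closedBall _ _
    obtain ⟨a, -, ha⟩ := hc.ultrafilter_le_nhds (l.map f) (by
      rw [le_principal_iff]
      exact hr.mono fun z hz => by simpa using hz)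
    exact ⟨a, ha⟩
  · right
    push Not at h
    rw [tendsto_atTop]
    intro r
    exact (h r).mono fun z hz => hz.le

lemma limit_real {μ : Measure ℝ} {S : Set ℝ} {R : ℝ} (G : Good μ S R) {l : Filter ℂ} [l.NeBot]
    {f : ℂ → ℂ} {a : ℂ} (hf : Tendsto f l (𝓝 a)) (hpos : ∀ᶠ z in l, 0 < (f z).im)
    (hm : Tendsto (fun z => (mTr μ (f z)).im) l (𝓝 0)) : a = (a.re : ℂ) := by
  have := G.prob
  have hR := G.Rpos
  have t1 : Tendsto (fun z => (f z).im) l (𝓝 a.im) := (Complex.continuous_im.tendsto _).comp hf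
  have h0 : 0 ≤ a.im := ge_of_tendsto t1 (hpos.mono fun z h => h.le)
  have hp : 0 < (R + ‖a‖) ^ 2 := by positivity
  have t2 : Tendsto (fun z => (f z).im * ((R + ‖f z‖) ^ 2)⁻¹) l
      (𝓝 (a.im * ((R + ‖a‖) ^ 2)⁻¹)) :=
    t1.mul (((hf.norm.const_add R).pow 2).inv₀ hp.ne')
  have h1 : a.im * ((R + ‖a‖) ^ 2)⁻¹ ≤ 0 := by
    refine le_of_tendsto_of_tendsto t2 hm (hpos.mono fun z h => ?_)
    simp only
    rw [im_mTr h.ne']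
    exact mul_le_mul_of_nonneg_left (Inu_lower G h.ne') h.le
  have h2 : a.im = 0 := by
    by_contra hn
    have : 0 < a.im := lt_of_le_of_ne h0 (Ne.symm hn)
    have : 0 < a.im * ((R + ‖a‖) ^ 2)⁻¹ := by positivity
    linarith
  apply Complex.ext <;> simp [h2]

lemma dens_zero {ν : Measure ℝ} {ρ : ℝ → ℝ} (hc : Continuous ρ) (hnn : ∀ x, 0 ≤ ρ x)
    (hd : ν = volume.withDensity (fun x => ENNReal.ofReal (ρ x))) {x : ℝ}
    (hx : x ∉ msupport ν) : ρ x = 0 := by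
  by_contra h0
  have hpos : 0 < ρ x := lt_of_le_of_ne (hnn x) (Ne.symm h0)
  apply hx
  intro U hU hxU
  rw [pos_iff_ne_zero]
  intro hz
  rw [hd, withDensity_apply_eq_zero (by fun_prop)] at hz
  have hset : {y | ENNReal.ofReal (ρ y) ≠ 0} = {y | 0 < ρ y} := by
    ext y; simp
  rw [hset] at hz
  have hopen : IsOpen ({y | 0 < ρ y} ∩ U) := (isOpen_lt continuous_const hc).inter hU
  exact (hopen.measure_pos volume ⟨x, hpos, hxU⟩).ne' hz

end

/-- Theorem 2.6, exterior points: square-root decay of the density of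
`μ_α ⊞ μ_β` at any exterior point `E₀` of `𝒱_{α⊞β}`. -/
theorem statement18 (μa μb : Measure ℝ)
    (da : AbsJacobiData μa) (db : AbsJacobiData μb)
    (ωa ωb : ℂ → ℂ) (hsub : IsPairSubordination μa μb ωa ωb)
    (ν : Measure ℝ) (hν : IsFreeConv μa μb ωb ν)
    (ρab : ℝ → ℝ) (hcont : Continuous ρab) (hnn : ∀ x, 0 ≤ ρab x)
    (hdens : ν = volume.withDensity (fun x => ENNReal.ofReal (ρab x)))
    (E0 : ℝ) (hE0 : E0 ∈ frontier {E : ℝ | 0 < ρab E})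
    (hext : ∃ ε₀ > (0 : ℝ), ∀ ε : ℝ, 0 < ε → ε < ε₀ →
      E0 - ε ∉ msupport ν ∨ E0 + ε ∉ msupport ν) :
    ∃ C1 > (0 : ℝ), ∃ K > (0 : ℝ), ∃ δ > (0 : ℝ),
      ((∀ E ∈ Set.Ioo E0 (E0 + δ),
          |ρab E - C1 * Real.sqrt (E - E0)| ≤ K * (E - E0)) ∧
        ∀ E ∈ Set.Ioc (E0 - δ) E0, ρab E = 0) ∨
      ((∀ E ∈ Set.Ioo (E0 - δ) E0,
          |ρab E - C1 * Real.sqrt (E0 - E)| ≤ K * (E0 - E)) ∧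
        ∀ E ∈ Set.Ico E0 (E0 + δ), ρab E = 0) := by
  obtain ⟨S, R, G⟩ := good_of_jacobi da
  obtain ⟨T, Q, H⟩ := good_of_jacobi db
  have hprob : IsProbabilityMeasure ν := hν.1
  have hP := poisson hcont hnn hdens
  have hsol : ∀ z : ℂ, 0 < z.im → Sol μa μb (ωb z) (ωa z) z := by
    intro z hz
    have h1 := hsub.eq_a z hz
    have h2 := hsub.eq_b z hz
    refine ⟨hz, hz.trans_le (hsub.im_b z hz), hz.trans_le (hsub.im_a z hz), ?_, ?_⟩
    · have h3 := h1.symm.trans h2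
      rw [FTr, FTr] at h3
      exact inv_injective (neg_injective h3)
    · rw [FTr] at h1; rw [← h1]; ring
  have hopen : IsOpen {E : ℝ | 0 < ρab E} := isOpen_lt continuous_const hcont
  have hρ0 : ρab E0 = 0 := by
    rw [hopen.frontier_eq] at hE0
    have : ¬ 0 < ρab E0 := hE0.2
    exact le_antisymm (not_lt.1 this) (hnn E0)
  have hfr : ¬ ∀ᶠ E in 𝓝 E0, ρab E = 0 := by
    intro h
    have h1 : ∃ᶠ E in 𝓝 E0, 0 < ρab E := mem_closure_iff_frequently.1 hE0.1
    obtain ⟨E, h2, h3⟩ := (h1.and_eventually h).exists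
    linarith
  have hext' : ∃ ε₀ > (0 : ℝ), ∀ ε : ℝ, 0 < ε → ε < ε₀ →
      ρab (E0 - ε) = 0 ∨ ρab (E0 + ε) = 0 := by
    obtain ⟨ε₀, h0, h⟩ := hext
    exact ⟨ε₀, h0, fun ε h1 h2 => (h ε h1 h2).imp (dens_zero hcont hnn hdens)
      (dens_zero hcont hnn hdens)⟩
  have hne : (𝓝[{z : ℂ | 0 < z.im}] (E0 : ℂ)).NeBot := by
    rw [← mem_closure_iff_nhdsWithin_neBot, Complex.closure_setOfPred_lt_im]
    simp
  set l : Ultrafilter ℂ := Ultrafilter.of (𝓝[{z : ℂ | 0 < z.im}] (E0 : ℂ)) with hl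
  have hle : (l : Filter ℂ) ≤ 𝓝[{z : ℂ | 0 < z.im}] (E0 : ℂ) := Ultrafilter.of_le _
  have hlim : ∀ᶠ z in (l : Filter ℂ), 0 < z.im := hle self_mem_nhdsWithin
  have hlid : Tendsto id (l : Filter ℂ) (𝓝 (E0 : ℂ)) := hle.trans nhdsWithin_le_nhds
  have hsoll : ∀ᶠ z in (l : Filter ℂ), Sol μa μb (ωb z) (ωa z) z := hlim.mono hsol
  have hm : Tendsto (fun z => (mTr ν z).im) l (𝓝 0) := by
    have := (hP E0).mono_left hle
    rwa [hρ0, mul_zero] at this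
  have hmb : Tendsto (fun z => (mTr μa (ωb z)).im) l (𝓝 0) :=
    hm.congr' (hlim.mono fun z hz => by simp only; rw [hν.2 z hz])
  have hma : Tendsto (fun z => (mTr μb (ωa z)).im) l (𝓝 0) :=
    hmb.congr' (hsoll.mono fun z hz => by simp only; rw [hz.eqm])
  have hda : (∃ a : ℝ, Tendsto ωa l (𝓝 (a : ℂ))) ∨ Tendsto (fun z => ‖ωa z‖) l atTop := by
    refine (ultra_dich l ωa).imp (fun ⟨a, h⟩ => ⟨a.re, ?_⟩) id
    rw [← limit_real H h (hsoll.mono fun z hz => hz.im_a) hma]; exact h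
  have hdb : (∃ a : ℝ, Tendsto ωb l (𝓝 (a : ℂ))) ∨ Tendsto (fun z => ‖ωb z‖) l atTop := by
    refine (ultra_dich l ωb).imp (fun ⟨a, h⟩ => ⟨a.re, ?_⟩) id
    rw [← limit_real G h (hsoll.mono fun z hz => hz.im_w) hmb]; exact h
  rcases hdb with ⟨b, hb⟩ | hb
  · obtain ⟨Z, m0, h1, h2, h3, h4, h5⟩ := exists_Z G H hsoll hlid hb hda
    refine core (M := mTr ν) hρ0 hP h1 h2 h3 ?_ h5 hfr hext'
    filter_upwards [h4] with m h6 h7 h8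
    obtain ⟨w, a, h9, h10⟩ := h6 h7 h8
    rw [hν.2 _ h8, ← Sol.unique G H h9 (hsol _ h8), h10]
  · rcases hda with ⟨a, ha⟩ | ha
    · obtain ⟨Z, m0, h1, h2, h3, h4, h5⟩ := exists_Z H G (hsoll.mono fun z hz => hz.symm) hlid ha
        (Or.inr hb)
      refine core (M := mTr ν) hρ0 hP h1 h2 h3 ?_ h5 hfr hext'
      filter_upwards [h4] with m h6 h7 h8
      obtain ⟨w, a, h9, h10⟩ := h6 h7 h8
      rw [hν.2 _ h8, (hsol _ h8).eqm, ← Sol.unique H G h9 (hsol _ h8).symm, h10]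
    · exact (not_both_inf G H hsoll hlid hb ha).elim

end
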